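/- arXiv:2411.07125 — 3 statements merged into one kernel-verified Lean document; each statement's English description precedes it below -/
import Mathlib

section
/- For every δ > 0 there exist a constant γ = γ(δ) < ∞ and N ∈ ℕ such that for all n ≥ N and every ε with 0 < ε < 1/2, with probability at least 1 − δ over the random choice of the 2k hubs and the random perfect matching, the total variation mixing time of the chain satisfies t_mix(ε) ≤ γ · n^{(k+2)/(k+1)} · log(1/ε). -/
/-!
The proof bounds the `ℓ²` distance to equilibrium by a Nash-type inequality in Fourier space
whose constant is controlled, with high probability, by averaging over the random jump lengths.

*Energy inequality* (`energy_ineq`). Over one block of time `K n`, a constant number of turns of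
the drifting walk around the cycle, the perturbed chain started from `f` loses at least a
constant times `(‖f‖² - ‖P₀^{Kn} f‖²) + ∑_{z ∈ H} ‖f(· + μ z - z) - f‖²` of squared norm, where
`P₀` is the chain without matching edges. By Duhamel the perturbed evolution is the free one plus
a source supported at the hubs, and the source is the difference of the evolution across a
matching edge, which is dissipated. Both the effect of the source (`driven_bound`) and the
observability of the free evolution at a single vertex (`observability`) follow from a multiplier
`F` of size `O(n)` on which the walk gains its drift at each step (`exists_potential`).

*Nash iteration* (`mixedBy_of_zsum`). In Fourier variables the loss is `∑ κ(ξ) |f̂(ξ)|²`, with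
`κ = rate` the sum of a free part and of `|χ(ξ (μ z - z)) - 1|²` over the hubs `z`. Suppose
`∑_{ξ ≠ 0} (1 + m κ(ξ))^{-(k+1)}` (`zsum`) is a small enough constant. Since `|f̂| ≤ 2` for
`f = P^t(x,·) - 1/n`, the quantity `u = n ‖f‖²` satisfies `Δu ≤ - c u^{1 + 1/(k+1)} / m` per block
while `u ≥ 1`, so it reaches `1` after `O(m)` blocks, and then decays exponentially at rate `c / m`.
The mixing time is therefore `O(n m log (1/ε))`.

*Choice of `m`.* Up to a factor `4^k`, the expectation over configurations may be taken over
independent uniform hubs (`configProb_ge`). For `0 < |ξ| ≤ √n` the average of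
`(1 + m |χ(ξ d) - 1|²)⁻¹` over a uniform jump `d` is at most `4 / √m` (`sum_damp_le`, a Poisson
kernel computation), and the free part is at least of order `ξ² / n`, so that
`E ∑ (1 + m κ)^{-(k+1)}` is of order `√(n / m) m^{-k/2} = √n m^{-(k+1)/2}`. For `|ξ| > √n` the free
part is bounded below and contributes `O(n m^{-(k+1)})`. Both are small for `m = B n^{1/(k+1)}`
with `B` large, and Markov's inequality concludes.
-/

open scoped BigOperators

noncomputable section

attribute [local instance 10] Classical.propDecidable

/-- Transition matrix of the perturbed cycle chain: forward probability `p`, backward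
probability `q`, probability `a` of using the added matching edge at a hub, remaining
mass on the diagonal. -/
def cycleP (n : ℕ) [NeZero n] (p q a : ℝ) (H : Finset (ZMod n)) (μ : ZMod n → ZMod n) :
    Matrix (ZMod n) (ZMod n) ℝ := fun x y =>
  (if y = x + 1 then p else 0) + (if y = x - 1 then q else 0) +
    (if x ∈ H ∧ y = μ x then a else 0) +
    (if y = x then 1 - p - q - (if x ∈ H then a else 0) else 0)

/-- `H` is a set of `2k` hubs and `μ` a fixed-point-free involution (perfect matching)
of `H`, extended by the identity outside `H`. -/
def IsConfig (n : ℕ) [NeZero n] (k : ℕ) (H : Finset (ZMod n)) (μ : ZMod n → ZMod n) : Prop :=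
  H.card = 2 * k ∧ (∀ x ∈ H, μ x ∈ H) ∧ (∀ x, μ (μ x) = x) ∧
    (∀ x ∈ H, μ x ≠ x) ∧ (∀ x, x ∉ H → μ x = x)

/-- Probability, under the uniform choice of the hub set together with a uniform perfect
matching on it, of the event `E`. -/
def configProb (n : ℕ) [NeZero n] (k : ℕ)
    (E : Finset (ZMod n) → (ZMod n → ZMod n) → Prop) : ℝ :=
  ((Finset.univ.filter (fun cfg : Finset (ZMod n) × (ZMod n → ZMod n) =>
      IsConfig n k cfg.1 cfg.2 ∧ E cfg.1 cfg.2)).card : ℝ) /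
    ((Finset.univ.filter (fun cfg : Finset (ZMod n) × (ZMod n → ZMod n) =>
      IsConfig n k cfg.1 cfg.2)).card : ℝ)

/-- The chain driven by `P` is mixed to total-variation tolerance `ε` at time `t`
(from every starting state), the stationary distribution being uniform. -/
def mixedBy (n : ℕ) [NeZero n] (P : Matrix (ZMod n) (ZMod n) ℝ) (ε : ℝ) (t : ℕ) : Prop :=
  ∀ x : ZMod n, (1 / 2 : ℝ) * ∑ y : ZMod n, |(P ^ t) x y - 1 / n| ≤ ε

set_option linter.unusedSectionVars false

/-! ### The evolution operators and their dissipation -/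

/-- Row-vector action of the hub-free biased walk on functions:
`stepFree p q f = f P₀`, where `P₀` is the chain without matching edges. -/
def stepFree {n : ℕ} (p q : ℝ) (f : ZMod n → ℝ) : ZMod n → ℝ :=
  fun y => p * f (y - 1) + q * f (y + 1) + (1 - p - q) * f y

/-- Row-vector action of the perturbed chain: `stepHub p q a μ f = f P`. Since `μ` is the
identity off the hubs, the source term lives on the hubs only. -/
def stepHub {n : ℕ} (p q a : ℝ) (μ : ZMod n → ZMod n) (f : ZMod n → ℝ) : ZMod n → ℝ :=
  fun y => stepFree p q f y + a * (f (μ y) - f y)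

/-- Squared Euclidean norm with respect to counting measure. -/
def nsq {n : ℕ} [NeZero n] (f : ZMod n → ℝ) : ℝ := ∑ x, f x ^ 2

/-- Squared norm of the discrete gradient. -/
def gradSq {n : ℕ} [NeZero n] (f : ZMod n → ℝ) : ℝ := ∑ x, (f (x + 1) - f x) ^ 2

/-- Squared differences across the matching edges. -/
def hubSq {n : ℕ} [NeZero n] (μ : ZMod n → ZMod n) (f : ZMod n → ℝ) : ℝ :=
  ∑ x, (f (μ x) - f x) ^ 2

/-- The `ℓ²` dissipation of the free walk, written as a sum of squares. -/
def dissFree {n : ℕ} [NeZero n] (p q : ℝ) (f : ZMod n → ℝ) : ℝ :=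
  ∑ y, (p * q * (f (y - 1) - f (y + 1)) ^ 2 + p * (1 - p - q) * (f (y - 1) - f y) ^ 2
    + q * (1 - p - q) * (f (y + 1) - f y) ^ 2)

section Energy

variable {n : ℕ} [NeZero n]

lemma sum_add_right (F : ZMod n → ℝ) (c : ZMod n) : ∑ x, F (x + c) = ∑ x, F x :=
  Equiv.sum_comp (Equiv.addRight c) F

lemma sum_sub_right (F : ZMod n → ℝ) (c : ZMod n) : ∑ x, F (x - c) = ∑ x, F x :=
  Equiv.sum_comp (Equiv.subRight c) F

lemma nsq_nonneg (f : ZMod n → ℝ) : 0 ≤ nsq f := Finset.sum_nonneg fun _ _ => sq_nonneg _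

lemma nsq_sub_stepFree (p q : ℝ) (f : ZMod n → ℝ) :
    nsq f - nsq (stepFree p q f) = dissFree p q f := by
  have h1 := sum_sub_right (fun y => f y ^ 2) 1
  have h2 := sum_add_right (fun y => f y ^ 2) 1
  have h3 : nsq f = ∑ y, (p * f (y - 1) ^ 2 + q * f (y + 1) ^ 2 + (1 - p - q) * f y ^ 2) := by
    simp only [Finset.sum_add_distrib, ← Finset.mul_sum]
    rw [h1, h2]; unfold nsq; ring
  rw [h3]; unfold nsq dissFree
  rw [← Finset.sum_sub_distrib]
  refine Finset.sum_congr rfl fun y _ => ?_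
  unfold stepFree; ring

lemma stepFree_sq_le {p q : ℝ} (hp : 0 ≤ p) (hq : 0 ≤ q) (hpq : p + q ≤ 1)
    (f : ZMod n → ℝ) (y : ZMod n) :
    stepFree p q f y ^ 2 ≤ stepFree p q (fun x => f x ^ 2) y := by
  unfold stepFree
  have h1 : 0 ≤ p * q * (f (y - 1) - f (y + 1)) ^ 2 := by positivity
  have hr : 0 ≤ 1 - p - q := by linarith
  have h2 : 0 ≤ p * (1 - p - q) * (f (y - 1) - f y) ^ 2 := by positivity
  have h3 : 0 ≤ q * (1 - p - q) * (f (y + 1) - f y) ^ 2 := by positivity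
  nlinarith

lemma dissFree_nonneg {p q : ℝ} (hp : 0 ≤ p) (hq : 0 ≤ q) (hpq : p + q ≤ 1)
    (f : ZMod n → ℝ) : 0 ≤ dissFree p q f := by
  have hr : 0 ≤ 1 - p - q := by linarith
  exact Finset.sum_nonneg fun y _ => by positivity

lemma dissFree_sub_le {p q : ℝ} (hp : 0 ≤ p) (hq : 0 ≤ q) (hpq : p + q ≤ 1)
    (f g : ZMod n → ℝ) :
    dissFree p q (fun x => f x - g x) ≤ 2 * dissFree p q f + 2 * dissFree p q g := by
  have hr : 0 ≤ 1 - p - q := by linarith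
  unfold dissFree
  rw [Finset.mul_sum, Finset.mul_sum, ← Finset.sum_add_distrib]
  refine Finset.sum_le_sum fun y _ => ?_
  have key : ∀ a b c d : ℝ, (a - b - (c - d)) ^ 2 ≤ 2 * (a - c) ^ 2 + 2 * (b - d) ^ 2 := by
    intro a b c d; nlinarith [sq_nonneg (a - c + (b - d))]
  have e1 := mul_le_mul_of_nonneg_left (key (f (y-1)) (g (y-1)) (f (y+1)) (g (y+1)))
    (mul_nonneg hp hq)
  have e2 := mul_le_mul_of_nonneg_left (key (f (y-1)) (g (y-1)) (f y) (g y)) (mul_nonneg hp hr)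
  have e3 := mul_le_mul_of_nonneg_left (key (f (y+1)) (g (y+1)) (f y) (g y)) (mul_nonneg hq hr)
  linarith

lemma dissFree_shift (p q : ℝ) (f : ZMod n → ℝ) (d : ZMod n) :
    dissFree p q (fun x => f (x + d)) = dissFree p q f := by
  unfold dissFree
  conv_rhs => rw [← sum_add_right _ d]
  refine Finset.sum_congr rfl fun y _ => ?_
  simp only [show y - 1 + d = y + d - 1 by ring, show y + 1 + d = y + d + 1 by ring]

lemma dissFree_le_gradSq {p q : ℝ} (hp : 0 ≤ p) (hq : 0 ≤ q) (hpq : p + q ≤ 1)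
    (f : ZMod n → ℝ) : dissFree p q f ≤ 6 * gradSq f := by
  have hr : 0 ≤ 1 - p - q := by linarith
  have h1 : gradSq f = ∑ y, (f y - f (y - 1)) ^ 2 := by
    unfold gradSq
    rw [← sum_sub_right _ 1]
    simp
  have h2 : 6 * gradSq f = ∑ y, (3 * (f (y + 1) - f y) ^ 2 + 3 * (f y - f (y - 1)) ^ 2) := by
    rw [Finset.sum_add_distrib, ← Finset.mul_sum, ← Finset.mul_sum, ← h1]
    unfold gradSq; ring
  rw [h2]; unfold dissFree
  refine Finset.sum_le_sum fun y _ => ?_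
  set s := f (y + 1) - f y
  set t := f y - f (y - 1)
  have hs : (f (y - 1) - f (y + 1)) ^ 2 ≤ 2 * s ^ 2 + 2 * t ^ 2 := by
    have : f (y - 1) - f (y + 1) = -(s + t) := by simp only [s, t]; ring
    rw [this]; nlinarith [sq_nonneg (s - t)]
  have ht : (f (y - 1) - f y) ^ 2 = t ^ 2 := by simp only [t]; ring
  rw [ht]
  have b1 : p * q ≤ 1 := by nlinarith
  have b2 : p * (1 - p - q) ≤ 1 := by nlinarith
  have b3 : q * (1 - p - q) ≤ 1 := by nlinarith
  have c1 : p * q * (f (y - 1) - f (y + 1)) ^ 2 ≤ 1 * (2 * s ^ 2 + 2 * t ^ 2) :=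
    mul_le_mul b1 hs (sq_nonneg _) zero_le_one
  have c2 : p * (1 - p - q) * t ^ 2 ≤ 1 * t ^ 2 := mul_le_mul_of_nonneg_right b2 (sq_nonneg _)
  have c3 : q * (1 - p - q) * s ^ 2 ≤ 1 * s ^ 2 := mul_le_mul_of_nonneg_right b3 (sq_nonneg _)
  linarith

/-- The part of the `ℓ²` dissipation of the perturbed chain at the vertex `y` which is
kept in the estimates. -/
def hubVar (p q a : ℝ) (μ : ZMod n → ZMod n) (f : ZMod n → ℝ) (y : ZMod n) : ℝ :=
  p * q * (f (y - 1) - f (y + 1)) ^ 2 + q * a * (f (y + 1) - f (μ y)) ^ 2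

lemma sum_hubVar_le {p q a : ℝ} (hp : 0 ≤ p) (hq : 0 ≤ q) (ha : 0 ≤ a)
    (hpqa : p + q + a ≤ 1) {μ : ZMod n → ZMod n} (hμ : ∀ x, μ (μ x) = x) (f : ZMod n → ℝ) :
    ∑ y, hubVar p q a μ f y ≤ nsq f - nsq (stepHub p q a μ f) := by
  have h1 := sum_sub_right (fun y => f y ^ 2) 1
  have h2 := sum_add_right (fun y => f y ^ 2) 1
  have h4 : ∑ y, f (μ y) ^ 2 = ∑ y, f y ^ 2 :=
    Equiv.sum_comp (Function.Involutive.toPerm μ hμ) (fun y => f y ^ 2)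
  have h3 : nsq f = ∑ y, (p * f (y - 1) ^ 2 + q * f (y + 1) ^ 2 + a * f (μ y) ^ 2
      + (1 - p - q - a) * f y ^ 2) := by
    simp only [Finset.sum_add_distrib, ← Finset.mul_sum]
    rw [h1, h2, h4]; unfold nsq; ring
  rw [h3]; unfold nsq
  rw [← Finset.sum_sub_distrib]
  refine Finset.sum_le_sum fun y _ => ?_
  have hr : 0 ≤ 1 - p - q - a := by linarith
  have e1 : 0 ≤ p * a * (f (y - 1) - f (μ y)) ^ 2 := by positivity
  have e2 : 0 ≤ p * (1 - p - q - a) * (f (y - 1) - f y) ^ 2 := by positivity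
  have e3 : 0 ≤ q * (1 - p - q - a) * (f (y + 1) - f y) ^ 2 := by positivity
  have e4 : 0 ≤ a * (1 - p - q - a) * (f (μ y) - f y) ^ 2 := by positivity
  unfold hubVar stepHub stepFree
  nlinarith

/-- Walking back from `x` one leaves the hub set within `2k` steps, so that the gradient at
`x` is controlled by the dissipation at the `2k + 1` vertices up to `x`; this covers
hubs without laziness. -/
lemma grad_sq_le {p q a c : ℝ} (hc : 0 < c) (h1 : c ≤ p * q) (h2 : c ≤ q * a)
    {H : Finset (ZMod n)} {μ : ZMod n → ZMod n} (hμ : ∀ x, x ∉ H → μ x = x)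
    (f : ZMod n → ℝ) (j : ℕ) :
    ∀ x : ZMod n, (∃ i ≤ j, x - (i : ZMod n) ∉ H) →
      c * (f (x + 1) - f x) ^ 2 ≤
        ∑ i ∈ Finset.range (j + 1), 2 ^ (i + 1) * hubVar p q a μ f (x - (i : ZMod n)) := by
  have hV : ∀ x, 0 ≤ hubVar p q a μ f x := fun x => by
    have : 0 ≤ p * q := by linarith
    have : 0 ≤ q * a := by linarith
    unfold hubVar; positivity
  have hout : ∀ x, x ∉ H → c * (f (x + 1) - f x) ^ 2 ≤ hubVar p q a μ f x := by
    intro x hx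
    unfold hubVar
    rw [hμ x hx]
    have := mul_le_mul_of_nonneg_right h2 (sq_nonneg (f (x + 1) - f x))
    have : 0 ≤ p * q * (f (x - 1) - f (x + 1)) ^ 2 :=
      mul_nonneg (by linarith) (sq_nonneg _)
    linarith
  induction j with
  | zero =>
    rintro x ⟨i, hi, hx⟩
    obtain rfl : i = 0 := by omega
    simp only [Nat.cast_zero, sub_zero] at hx
    simp
    linarith [hout x hx, hV x]
  | succ j ih =>
    rintro x ⟨i, hi, hx⟩
    by_cases hxH : x ∈ H
    · have hi0 : i ≠ 0 := by rintro rfl; simp at hx; exact hx hxH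
      obtain ⟨i, rfl⟩ := Nat.exists_eq_succ_of_ne_zero hi0
      have := ih (x - 1) ⟨i, by omega, by
        convert hx using 1; push_cast; ring_nf⟩
      rw [Finset.sum_range_succ']
      have e1 : ∑ i ∈ Finset.range (j + 1), (2:ℝ) ^ (i + 1 + 1) *
          hubVar p q a μ f (x - ((i + 1 : ℕ) : ZMod n)) =
          2 * ∑ i ∈ Finset.range (j + 1), 2 ^ (i + 1) *
            hubVar p q a μ f (x - 1 - (i : ZMod n)) := by
        rw [Finset.mul_sum]
        refine Finset.sum_congr rfl fun i _ => ?_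
        rw [show x - ((i + 1 : ℕ) : ZMod n) = x - 1 - (i : ZMod n) by push_cast; ring]
        ring
      rw [e1]
      simp only [sub_add_cancel] at this
      have e2 : c * (f (x - 1) - f (x + 1)) ^ 2 ≤ hubVar p q a μ f x := by
        unfold hubVar
        have := mul_le_mul_of_nonneg_right h1 (sq_nonneg (f (x - 1) - f (x + 1)))
        have : 0 ≤ q * a * (f (x + 1) - f (μ x)) ^ 2 := mul_nonneg (by linarith) (sq_nonneg _)
        linarith
      have e3 : (f (x + 1) - f x) ^ 2 ≤ 2 * (f x - f (x - 1)) ^ 2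
          + 2 * (f (x - 1) - f (x + 1)) ^ 2 := by
        nlinarith [sq_nonneg (f x - f (x - 1) - (f (x - 1) - f (x + 1)))]
      have e4 := mul_le_mul_of_nonneg_left e3 hc.le
      simp
      linarith
    · rw [Finset.sum_range_succ']
      have : 0 ≤ ∑ i ∈ Finset.range (j + 1), (2:ℝ) ^ (i + 1 + 1) *
          hubVar p q a μ f (x - ((i + 1 : ℕ) : ZMod n)) :=
        Finset.sum_nonneg fun i _ => mul_nonneg (by positivity) (hV _)
      have h0 := hout x hxH
      simp at this ⊢
      linarith [hV x]

lemma gradSq_add_hubSq_le {p q a : ℝ} (hp : 0 < p) (hq : 0 < q) (ha : 0 < a)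
    (hpqa : p + q + a ≤ 1) {k : ℕ} (hn : 2 * k < n) {H : Finset (ZMod n)}
    {μ : ZMod n → ZMod n} (hc : IsConfig n k H μ) (f : ZMod n → ℝ) :
    gradSq f + hubSq μ f ≤ 4 * (2 ^ (2 * k + 2) / min (p * q) (q * a))
      * (nsq f - nsq (stepHub p q a μ f)) := by
  obtain ⟨hcard, -, hinv, -, hoff⟩ := hc
  set c := min (p * q) (q * a) with hcdef
  have hc0 : 0 < c := lt_min (by positivity) (by positivity)
  have hV := sum_hubVar_le hp.le hq.le ha.le hpqa hinv f
  set V := ∑ y, hubVar p q a μ f y with hVdef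
  set D := nsq f - nsq (stepHub p q a μ f)
  have hV0 : 0 ≤ V := Finset.sum_nonneg fun y _ => by unfold hubVar; positivity
  have hex : ∀ x : ZMod n, ∃ i ≤ 2 * k, x - (i : ZMod n) ∉ H := by
    intro x
    by_contra! hcon
    have hinj : Set.InjOn (fun i : ℕ => x - (i : ZMod n)) (Finset.range (2 * k + 1)) := by
      intro i hi j hj hij
      simp only [Finset.coe_range, Set.mem_Iio] at hi hj
      have : (i : ZMod n) = (j : ZMod n) := by simpa using hij
      rw [ZMod.natCast_eq_natCast_iff'] at this
      rwa [Nat.mod_eq_of_lt (by omega), Nat.mod_eq_of_lt (by omega)] at this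
    have := Finset.card_le_card_of_injOn (s := Finset.range (2 * k + 1)) (t := H)
      (fun i : ℕ => x - (i : ZMod n)) (fun i hi => by
        simp only [Finset.coe_range, Set.mem_Iio] at hi
        exact hcon i (by omega)) hinj
    simp [hcard] at this
  have hG : c * gradSq f ≤ 2 ^ (2 * k + 2) * V := by
    unfold gradSq
    rw [Finset.mul_sum]
    calc _ ≤ ∑ x, ∑ i ∈ Finset.range (2 * k + 1),
          2 ^ (i + 1) * hubVar p q a μ f (x - (i : ZMod n)) :=
          Finset.sum_le_sum fun x _ => grad_sq_le hc0 (min_le_left _ _) (min_le_right _ _)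
            hoff f (2 * k) x (hex x)
      _ = ∑ i ∈ Finset.range (2 * k + 1), 2 ^ (i + 1) * V := by
          rw [Finset.sum_comm]
          refine Finset.sum_congr rfl fun i _ => ?_
          rw [← Finset.mul_sum, sum_sub_right]
      _ ≤ 2 ^ (2 * k + 2) * V := by
          rw [← Finset.sum_mul]
          refine mul_le_mul_of_nonneg_right ?_ hV0
          have : ∀ m : ℕ, ∑ i ∈ Finset.range m, (2:ℝ) ^ (i + 1) ≤ 2 ^ (m + 1) := by
            intro m
            induction m with
            | zero => simp
            | succ m ih => rw [Finset.sum_range_succ, pow_succ _ (m + 1)]; linarith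
          exact this _
  have hGV : gradSq f ≤ 2 ^ (2 * k + 2) / c * V := by
    rw [div_mul_eq_mul_div, le_div_iff₀ hc0]; linarith
  have hY : hubSq μ f ≤ 2 * (V / c) + 2 * gradSq f := by
    have : hubSq μ f ≤ ∑ y, (2 * (hubVar p q a μ f y / c) + 2 * (f (y + 1) - f y) ^ 2) := by
      refine Finset.sum_le_sum fun y _ => ?_
      have e1 : (f (y + 1) - f (μ y)) ^ 2 ≤ hubVar p q a μ f y / c := by
        rw [le_div_iff₀ hc0]
        unfold hubVar
        have := mul_le_mul_of_nonneg_left (min_le_right (p * q) (q * a))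
          (sq_nonneg (f (y + 1) - f (μ y)))
        have : 0 ≤ p * q * (f (y - 1) - f (y + 1)) ^ 2 := by positivity
        rw [hcdef]; linarith
      nlinarith [sq_nonneg (f (y + 1) - f (μ y) + (f (y + 1) - f y))]
    refine this.trans_eq ?_
    rw [Finset.sum_add_distrib, ← Finset.mul_sum, ← Finset.mul_sum, ← Finset.sum_div]
    rfl
  have hVc : 2 * (V / c) ≤ 2 ^ (2 * k + 2) / c * V := by
    have : (2:ℝ) ≤ 2 ^ (2 * k + 2) := by
      calc (2:ℝ) = 2 ^ 1 := by norm_num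
        _ ≤ _ := pow_le_pow_right₀ (by norm_num) (by omega)
    have h := mul_le_mul_of_nonneg_right this (div_nonneg hV0 hc0.le)
    calc 2 * (V / c) ≤ 2 ^ (2 * k + 2) * (V / c) := h
      _ = _ := by ring
  have hfin : gradSq f + hubSq μ f ≤ 4 * (2 ^ (2 * k + 2) / c * V) := by linarith
  have hpos : 0 ≤ 4 * ((2:ℝ) ^ (2 * k + 2) / c) := by positivity
  calc gradSq f + hubSq μ f ≤ 4 * (2 ^ (2 * k + 2) / c) * V := by linarith
    _ ≤ _ := mul_le_mul_of_nonneg_left hV hpos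

end Energy

/-! ### A potential for the biased walk -/

section Potential

variable {n : ℕ} [NeZero n]

/-- A nonnegative potential of size `O(n)` on which the forward-drifting free walk gains its
drift `p - q` at every vertex except `0`, where the whole winding `n (p - q)` is paid back:
a linear ramp corrected by the harmonic function `(q / p) ^ x` so that it closes up. -/
lemma exists_potential {p q : ℝ} (hq : 0 < q) (hpq : q < p) :
    ∃ F : ZMod n → ℝ, (∀ x, 0 ≤ F x) ∧ (∀ x, F x ≤ (1 + p / (p - q)) * n) ∧
      ∀ x, p * F (x + 1) + q * F (x - 1) + (1 - p - q) * F x =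
        F x + (p - q) - (if x = 0 then n * (p - q) else 0) := by
  have hp : 0 < p := hq.trans hpq
  have hn : 0 < n := NeZero.pos n
  set ρ := q / p with hρ
  have hρ0 : 0 < ρ := by positivity
  have hρ1 : ρ < 1 := by rw [hρ, div_lt_one hp]; exact hpq
  have hρp : p * ρ = q := by rw [hρ]; field_simp
  have hρn : ρ ^ n < 1 := pow_lt_one₀ hρ0.le hρ1 hn.ne'
  set C := (n : ℝ) / (1 - ρ ^ n) with hC
  have hCn : C - C * ρ ^ n = n := by
    have : 1 - ρ ^ n ≠ 0 := by linarith
    rw [hC]; field_simp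
  have hC0 : 0 ≤ C := div_nonneg (by positivity) (by linarith)
  have hC1 : C ≤ p / (p - q) * n := by
    have h1 : ρ ^ n ≤ ρ := pow_le_of_le_one hρ0.le hρ1.le hn.ne'
    have h2 : p / (p - q) * n = n / (1 - ρ) := by
      have : p - q ≠ 0 := by linarith
      have : 1 - ρ = (p - q) / p := by rw [hρ]; field_simp
      rw [this]; field_simp
    rw [h2, hC]
    exact div_le_div_of_nonneg_left (by positivity) (by linarith) (by linarith)
  set G : ℕ → ℝ := fun j => j + C * ρ ^ j with hG
  have hG0 : G n = G 0 := by simp only [hG]; push_cast; simp; linarith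
  have hv1 : ∀ x : ZMod n, G (x + 1).val = G (x.val + 1) := by
    intro x
    rcases Nat.lt_or_ge (x.val + 1) n with h | h
    · congr 1
      rw [ZMod.val_add, ZMod.val_one_eq_one_mod, Nat.add_mod_mod, Nat.mod_eq_of_lt h]
    · have h' : x.val + 1 = n := le_antisymm (ZMod.val_lt x) h
      rw [h', hG0]; congr 1
      rw [ZMod.val_add, ZMod.val_one_eq_one_mod, Nat.add_mod_mod, h', Nat.mod_self]
  have hv0 : ∀ x : ZMod n, x ≠ 0 → (x - 1).val + 1 = x.val := by
    intro x hx
    have hx' : x = (x - 1) + 1 := by ring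
    rcases Nat.lt_or_ge ((x - 1).val + 1) n with h | h
    · conv_rhs => rw [hx', ZMod.val_add, ZMod.val_one_eq_one_mod, Nat.add_mod_mod,
        Nat.mod_eq_of_lt h]
    · exfalso; apply hx
      have h' : (x - 1).val + 1 = n := le_antisymm (ZMod.val_lt _) h
      rw [← ZMod.val_eq_zero, hx', ZMod.val_add, ZMod.val_one_eq_one_mod, Nat.add_mod_mod, h',
        Nat.mod_self]
  refine ⟨fun x => G x.val, fun x => ?_, fun x => ?_, fun x => ?_⟩
  · simp only [hG]; positivity
  · simp only [hG]
    have h1 : (x.val : ℝ) ≤ n := by exact_mod_cast (ZMod.val_lt x).le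
    have h2 : C * ρ ^ x.val ≤ C := mul_le_of_le_one_right hC0 (pow_le_one₀ hρ0.le hρ1.le)
    linarith
  · simp only [hv1]
    split_ifs with hx
    · subst hx
      have h1 : (0 - 1 : ZMod n).val + 1 = n := by
        have h := hv1 (0 - 1)
        rcases Nat.lt_or_ge ((0 - 1 : ZMod n).val + 1) n with h | h
        · exfalso
          have h2 : ((0 - 1 : ZMod n) + 1).val = (0 - 1 : ZMod n).val + 1 := by
            rw [ZMod.val_add, ZMod.val_one_eq_one_mod, Nat.add_mod_mod, Nat.mod_eq_of_lt h]
          simp at h2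
        · exact le_antisymm (ZMod.val_lt _) h
      obtain ⟨j, hj⟩ : ∃ j, (0 - 1 : ZMod n).val = j := ⟨_, rfl⟩
      rw [hj] at h1 ⊢
      simp only [hG, ZMod.val_zero]
      have hnj : (n : ℝ) = j + 1 := by rw [← h1]; push_cast; ring
      have hq' : C * p * ρ * ρ ^ j = C * p - p * n := by
        have : ρ ^ n = ρ ^ j * ρ := by rw [← h1, pow_succ]
        rw [this] at hCn
        linear_combination (-p) * hCn
      rw [← hρp] at *
      simp only [Nat.cast_zero, zero_add, pow_zero, pow_one, Nat.cast_one]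
      linear_combination hq' - p * ρ * hnj
    · have h1 := hv0 x hx
      obtain ⟨j, hj⟩ : ∃ j, (x - 1 : ZMod n).val = j := ⟨_, rfl⟩
      rw [hj] at h1
      rw [hj, ← h1]
      simp only [hG]
      push_cast
      rw [← hρp]
      ring

lemma sum_mul_stepFree (p q : ℝ) (F g : ZMod n → ℝ) :
    ∑ y, F y * stepFree p q g y =
      ∑ x, (p * F (x + 1) + q * F (x - 1) + (1 - p - q) * F x) * g x := by
  have h1 := sum_sub_right (fun x => F (x + 1) * g x) 1
  have h2 := sum_add_right (fun x => F (x - 1) * g x) 1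
  simp only [sub_add_cancel, add_sub_cancel_right] at h1 h2
  have e1 : ∑ y, F y * stepFree p q g y = p * ∑ y, F y * g (y - 1) + q * ∑ y, F y * g (y + 1)
      + (1 - p - q) * ∑ y, F y * g y := by
    simp only [Finset.mul_sum, ← Finset.sum_add_distrib]
    refine Finset.sum_congr rfl fun y _ => ?_
    unfold stepFree; ring
  rw [e1, h1, h2]
  simp only [Finset.mul_sum, ← Finset.sum_add_distrib]
  exact Finset.sum_congr rfl fun y _ => by ring

/-- The potential based at `z`, in the form used as a quadratic multiplier from above. -/
lemma exists_multiplier_upper {p q : ℝ} (hq : 0 < q) (hpq : q < p) (hpq1 : p + q ≤ 1)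
    (z : ZMod n) :
    ∃ F : ZMod n → ℝ, (∀ x, 0 ≤ F x) ∧ (∀ x, F x ≤ (1 + p / (p - q)) * n) ∧
      ∀ g : ZMod n → ℝ, ∑ y, F y * stepFree p q g y ^ 2 ≤
        ∑ y, F y * g y ^ 2 + (p - q) * nsq g - n * (p - q) * g z ^ 2 := by
  obtain ⟨F, hF0, hF1, hF⟩ := exists_potential (n := n) hq hpq
  have hp : 0 < p := hq.trans hpq
  refine ⟨fun x => F (x - z), fun x => hF0 _, fun x => hF1 _, fun g => ?_⟩
  calc ∑ y, F (y - z) * stepFree p q g y ^ 2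
      ≤ ∑ y, F (y - z) * stepFree p q (fun x => g x ^ 2) y :=
        Finset.sum_le_sum fun y _ => mul_le_mul_of_nonneg_left
          (stepFree_sq_le hp.le hq.le hpq1 g y) (hF0 _)
    _ = ∑ x, (F (x - z) + (p - q) - (if x = z then n * (p - q) else 0)) * g x ^ 2 := by
        rw [sum_mul_stepFree p q (fun x => F (x - z))]
        refine Finset.sum_congr rfl fun x _ => ?_
        have := hF (x - z)
        rw [show x + 1 - z = x - z + 1 by ring, show x - 1 - z = x - z - 1 by ring, this]
        simp only [sub_eq_zero]
    _ = _ := by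
        simp only [sub_mul, add_mul, Finset.sum_add_distrib, Finset.sum_sub_distrib, ite_mul,
          zero_mul, Finset.sum_ite_eq', Finset.mem_univ, if_true, nsq, Finset.mul_sum]

/-- The reflected potential based at `z`, in the form used as a quadratic multiplier
from below. -/
lemma exists_multiplier_lower {p q : ℝ} (hq : 0 < q) (hpq : q < p) (hpq1 : p + q ≤ 1)
    (z : ZMod n) :
    ∃ F : ZMod n → ℝ, (∀ x, 0 ≤ F x) ∧ (∀ x, F x ≤ (1 + p / (p - q)) * n) ∧
      ∀ g : ZMod n → ℝ, ∑ y, F y * stepFree p q g y ^ 2 ≤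
        ∑ y, F y * g y ^ 2 - (p - q) * nsq g + n * (p - q) * g z ^ 2 := by
  obtain ⟨F, hF0, hF1, hF⟩ := exists_potential (n := n) hq hpq
  have hp : 0 < p := hq.trans hpq
  set M := (1 + p / (p - q)) * (n : ℝ)
  refine ⟨fun x => M - F (x - z), fun x => by linarith [hF1 (x - z)],
    fun x => by linarith [hF0 (x - z)], fun g => ?_⟩
  calc ∑ y, (M - F (y - z)) * stepFree p q g y ^ 2
      ≤ ∑ y, (M - F (y - z)) * stepFree p q (fun x => g x ^ 2) y :=
        Finset.sum_le_sum fun y _ => mul_le_mul_of_nonneg_left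
          (stepFree_sq_le hp.le hq.le hpq1 g y) (by linarith [hF1 (y - z)])
    _ = ∑ x, (M - F (x - z) - (p - q) + (if x = z then n * (p - q) else 0)) * g x ^ 2 := by
        rw [sum_mul_stepFree p q (fun x => M - F (x - z))]
        refine Finset.sum_congr rfl fun x _ => ?_
        have := hF (x - z)
        rw [show x + 1 - z = x - z + 1 by ring, show x - 1 - z = x - z - 1 by ring]
        simp only [sub_eq_zero] at this
        congr 1
        linear_combination -this
    _ = _ := by
        simp only [sub_mul, add_mul, Finset.sum_add_distrib, Finset.sum_sub_distrib, ite_mul,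
          zero_mul, Finset.sum_ite_eq', Finset.mem_univ, if_true, nsq, Finset.mul_sum]

end Potential

/-! ### The energy inequality -/

section Duhamel

variable {n : ℕ} [NeZero n]

/-- Free evolution driven by a source supported on `H`, from zero initial data: the driven
part is controlled, at the hubs and in dissipation, by the size of the source. -/
lemma driven_bound {p q : ℝ} (hq : 0 < q) (hpq : q < p) (hpq1 : p + q ≤ 1)
    (H : Finset (ZMod n)) (K : ℕ) (e S : ℕ → ZMod n → ℝ) (he0 : ∀ y, e 0 y = 0)
    (he : ∀ t y, e (t + 1) y = stepFree p q (e t) y + S t y) (hS : ∀ t y, y ∉ H → S t y = 0)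
    (C : ℝ) (hC : C = H.card * (2 * K + 2 * (1 + p / (p - q)) / (p - q) + 2)) :
    ∑ t ∈ Finset.range (K * n), ∑ y ∈ H, e (t + 1) y ^ 2
        ≤ C ^ 2 * ∑ t ∈ Finset.range (K * n), nsq (S t) ∧
    ∑ t ∈ Finset.range (K * n), dissFree p q (e t)
        ≤ 2 * C * ∑ t ∈ Finset.range (K * n), nsq (S t) := by
  have hp : 0 < p := hq.trans hpq
  have hv : 0 < p - q := by linarith
  have hn : (0:ℝ) < n := by exact_mod_cast NeZero.pos n
  set w : ℕ → ℝ := fun t => ∑ y ∈ H, |e (t + 1) y| * |S t y| with hw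
  have hw0 : ∀ t, 0 ≤ w t := fun t => Finset.sum_nonneg fun y _ => by positivity
  set W := ∑ t ∈ Finset.range (K * n), w t with hW
  set X := ∑ t ∈ Finset.range (K * n), ∑ y ∈ H, e (t + 1) y ^ 2 with hX
  set Y := ∑ t ∈ Finset.range (K * n), nsq (S t) with hY
  have hW0 : 0 ≤ W := Finset.sum_nonneg fun t _ => hw0 t
  have hX0 : 0 ≤ X := Finset.sum_nonneg fun t _ => Finset.sum_nonneg fun y _ => sq_nonneg _
  have hY0 : 0 ≤ Y := Finset.sum_nonneg fun t _ => nsq_nonneg _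
  -- cross terms of a weight `F` with the source
  have hcross : ∀ (F : ZMod n → ℝ) (M : ℝ), (∀ x, 0 ≤ F x) → (∀ x, F x ≤ M) → ∀ t,
      ∑ y, F y * e (t + 1) y ^ 2 ≤ ∑ y, F y * stepFree p q (e t) y ^ 2 + 2 * M * w t := by
    intro F M hF0 hFM t
    have h1 : 2 * M * w t = ∑ y, 2 * M * (|e (t + 1) y| * |S t y|) := by
      rw [hw, ← Finset.mul_sum]
      congr 1
      refine Finset.sum_subset (Finset.subset_univ H) fun y _ hy => ?_
      rw [hS t y hy]; simp
    rw [h1, ← Finset.sum_add_distrib]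
    refine Finset.sum_le_sum fun y _ => ?_
    have h2 : stepFree p q (e t) y = e (t + 1) y - S t y := by rw [he]; ring
    rw [h2]
    have h3 : e (t + 1) y * S t y ≤ |e (t + 1) y| * |S t y| := by
      rw [← abs_mul]; exact le_abs_self _
    have h4 : F y * (e (t + 1) y * S t y) ≤ M * (|e (t + 1) y| * |S t y|) :=
      (mul_le_mul_of_nonneg_left h3 (hF0 y)).trans
        (mul_le_mul_of_nonneg_right (hFM y) (by positivity))
    nlinarith [mul_nonneg (hF0 y) (sq_nonneg (S t y))]
  have henergy : ∀ t, ∑ s ∈ Finset.range t, dissFree p q (e s) + nsq (e t)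
      ≤ 2 * ∑ s ∈ Finset.range t, w s := by
    intro t
    induction t with
    | zero => simp [nsq, he0]
    | succ t ih =>
      rw [Finset.sum_range_succ, Finset.sum_range_succ]
      have h1 := hcross (fun _ => 1) 1 (fun _ => zero_le_one) (fun _ => le_rfl) t
      simp only [one_mul] at h1
      have h2 := nsq_sub_stepFree p q (e t)
      have h3 : nsq (e (t + 1)) ≤ nsq (stepFree p q (e t)) + 2 * w t := by
        unfold nsq; linarith
      linarith
  have hWt : ∀ t ≤ K * n, ∑ s ∈ Finset.range t, w s ≤ W := fun t ht =>
    Finset.sum_le_sum_of_subset_of_nonneg (Finset.range_mono ht) fun s _ _ => hw0 s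
  have hdiss0 : ∀ t, 0 ≤ ∑ s ∈ Finset.range t, dissFree p q (e s) := fun t =>
    Finset.sum_nonneg fun s _ => dissFree_nonneg hp.le hq.le hpq1 _
  have hnsq : ∀ t ≤ K * n, nsq (e t) ≤ 2 * W := fun t ht => by
    linarith [henergy t, hWt t ht, hdiss0 t]
  set B := 2 * (K:ℝ) + 2 * (1 + p / (p - q)) / (p - q) + 2 with hB
  have hpt : ∀ z, ∑ t ∈ Finset.range (K * n), e (t + 1) z ^ 2 ≤ B * W := by
    intro z
    obtain ⟨F, hF0, hF1, hF⟩ := exists_multiplier_upper (n := n) hq hpq hpq1 z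
    have h1 : ∀ T ≤ K * n, ∑ y, F y * e T y ^ 2
        + n * (p - q) * ∑ t ∈ Finset.range T, e t z ^ 2
        ≤ (p - q) * T * (2 * W)
          + 2 * ((1 + p / (p - q)) * n) * ∑ t ∈ Finset.range T, w t := by
      intro T
      induction T with
      | zero => intro _; simp [he0]
      | succ T ih =>
        intro hT
        have i1 := ih (by omega)
        have i2 := hcross F _ hF0 hF1 T
        have i3 := hF (e T)
        have i4 := mul_le_mul_of_nonneg_left (hnsq T (by omega)) hv.le
        rw [Finset.sum_range_succ, Finset.sum_range_succ]
        push_cast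
        nlinarith
    have h2 := h1 (K * n) le_rfl
    have h3 : 0 ≤ ∑ y, F y * e (K * n) y ^ 2 :=
      Finset.sum_nonneg fun y _ => mul_nonneg (hF0 y) (sq_nonneg _)
    have h4 : ∑ t ∈ Finset.range (K * n), e t z ^ 2 ≤ (B - 2) * W := by
      have : n * (p - q) * ∑ t ∈ Finset.range (K * n), e t z ^ 2
          ≤ n * (p - q) * ((B - 2) * W) := by
        have e1 : n * (p - q) * ((B - 2) * W) = (p - q) * (K * n : ℕ) * (2 * W)
          + 2 * ((1 + p / (p - q)) * n) * W := by
          rw [hB]; push_cast; field_simp; ring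
        rw [e1]; linarith
      exact le_of_mul_le_mul_left this (by positivity)
    have h5 : e (K * n) z ^ 2 ≤ 2 * W := by
      refine le_trans ?_ (hnsq (K * n) le_rfl)
      exact Finset.single_le_sum (f := fun y => e (K * n) y ^ 2)
        (fun y _ => sq_nonneg _) (Finset.mem_univ z)
    have h6 := Finset.sum_range_succ' (fun t => e t z ^ 2) (K * n)
    rw [Finset.sum_range_succ] at h6
    simp only [he0] at h6
    linarith
  have hXW : X ≤ C * W := by
    rw [hX, Finset.sum_comm]
    calc _ ≤ ∑ z ∈ H, B * W := Finset.sum_le_sum fun z _ => hpt z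
      _ = C * W := by rw [Finset.sum_const, nsmul_eq_mul, hC]; ring
  have hCS : W ^ 2 ≤ X * Y := by
    have h1 : Y = ∑ t ∈ Finset.range (K * n), ∑ y ∈ H, S t y ^ 2 := by
      refine Finset.sum_congr rfl fun t _ => ?_
      symm
      exact Finset.sum_subset (Finset.subset_univ H) fun y _ hy => by rw [hS t y hy]; simp
    rw [h1, hX, hW]
    simp only [hw, ← Finset.sum_product']
    refine (Finset.sum_mul_sq_le_sq_mul_sq _ _ _).trans_eq ?_
    simp only [sq_abs]
  have hC0 : 0 ≤ C := by rw [hC]; positivity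
  have hWY : W ≤ C * Y := by
    rcases hW0.eq_or_lt with h | h
    · rw [← h]; positivity
    · have : W * W ≤ W * (C * Y) := by nlinarith
      exact le_of_mul_le_mul_left this h
  refine ⟨?_, ?_⟩
  · nlinarith
  · nlinarith [henergy (K * n), nsq_nonneg (e (K * n))]

lemma stepFree_shift (p q : ℝ) (f : ZMod n → ℝ) (d : ZMod n) :
    stepFree p q (fun x => f (x + d) - f x) =
      fun x => stepFree p q f (x + d) - stepFree p q f x := by
  funext x
  simp only [stepFree]
  rw [show x - 1 + d = x + d - 1 by ring, show x + 1 + d = x + d + 1 by ring]; ring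

lemma nsq_sub_iterate_stepFree (p q : ℝ) (f : ZMod n → ℝ) (T : ℕ) :
    nsq f - nsq ((stepFree p q)^[T] f) =
      ∑ t ∈ Finset.range T, dissFree p q ((stepFree p q)^[t] f) := by
  induction T with
  | zero => simp
  | succ T ih =>
    rw [Finset.sum_range_succ, ← ih, ← nsq_sub_stepFree, Function.iterate_succ_apply']; ring

/-- Observability of the free walk at one vertex `z`: the multiplier identity bounds the
`ℓ²` norm of the initial datum by what is seen at `z` over a time `K n`, up to the dissipation
during that time. -/
lemma observability {p q : ℝ} (hq : 0 < q) (hpq : q < p) (hpq1 : p + q ≤ 1) (K : ℕ)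
    (hK : 1 + (1 + p / (p - q)) ≤ (p - q) * K) (g : ZMod n → ℝ) (z : ZMod n) :
    nsq g ≤ (p - q) * ∑ t ∈ Finset.range (K * n), (stepFree p q)^[t] g z ^ 2
      + (p - q) * K * ∑ t ∈ Finset.range (K * n), dissFree p q ((stepFree p q)^[t] g) := by
  have hp : 0 < p := hq.trans hpq
  have hv : 0 < p - q := by linarith
  have hn : (0:ℝ) < n := by exact_mod_cast NeZero.pos n
  obtain ⟨F, hF0, hF1, hF⟩ := exists_multiplier_lower (n := n) hq hpq hpq1 z
  set D := ∑ t ∈ Finset.range (K * n), dissFree p q ((stepFree p q)^[t] g) with hD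
  have hlow : ∀ t ≤ K * n, nsq g - D ≤ nsq ((stepFree p q)^[t] g) := by
    intro t ht
    have h1 := nsq_sub_iterate_stepFree p q g t
    have h2 : ∑ s ∈ Finset.range t, dissFree p q ((stepFree p q)^[s] g) ≤ D :=
      Finset.sum_le_sum_of_subset_of_nonneg (Finset.range_mono ht)
        fun s _ _ => dissFree_nonneg hp.le hq.le hpq1 _
    linarith
  have h1 : ∀ T ≤ K * n, ∑ y, F y * (stepFree p q)^[T] g y ^ 2 + (p - q) * T * (nsq g - D)
      ≤ ∑ y, F y * g y ^ 2
        + n * (p - q) * ∑ t ∈ Finset.range T, (stepFree p q)^[t] g z ^ 2 := by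
    intro T
    induction T with
    | zero => intro _; simp
    | succ T ih =>
      intro hT
      have i1 := ih (by omega)
      have i2 := hF ((stepFree p q)^[T] g)
      have i3 := mul_le_mul_of_nonneg_left (hlow T (by omega)) hv.le
      rw [Finset.sum_range_succ, Function.iterate_succ_apply']
      push_cast
      nlinarith
  have h2 := h1 (K * n) le_rfl
  have h3 : 0 ≤ ∑ y, F y * (stepFree p q)^[K * n] g y ^ 2 :=
    Finset.sum_nonneg fun y _ => mul_nonneg (hF0 y) (sq_nonneg _)
  have h4 : ∑ y, F y * g y ^ 2 ≤ (1 + p / (p - q)) * n * nsq g := by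
    unfold nsq
    rw [Finset.mul_sum]
    exact Finset.sum_le_sum fun y _ => mul_le_mul_of_nonneg_right (hF1 y) (sq_nonneg _)
  push_cast at h2
  have h5 := mul_le_mul_of_nonneg_right hK (nsq_nonneg g)
  have h6 := mul_le_mul_of_nonneg_left h5 hn.le
  refine le_of_mul_le_mul_left ?_ hn
  nlinarith

end Duhamel

lemma sq_sub_add_le (u v w : ℝ) : (u - v + w) ^ 2 ≤ 3 * u ^ 2 + 3 * v ^ 2 + 3 * w ^ 2 := by
  nlinarith [sq_nonneg (u + v), sq_nonneg (u - w), sq_nonneg (v + w)]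

set_option maxHeartbeats 1000000 in
/-- Over a time `K n` the perturbed chain dissipates, up to a constant, at least what the free
walk would dissipate together with the defect of invariance of `f` under every jump `μ z - z`. -/
theorem energy_ineq {k : ℕ} {p q a : ℝ} (hp : 0 < p) (hq : 0 < q) (ha : 0 < a)
    (hpqa : p + q + a ≤ 1) (hpq : q < p) :
    ∃ C : ℝ, 0 < C ∧ ∃ K : ℕ, 1 ≤ K ∧ ∀ (n : ℕ) [NeZero n], 2 * k < n →
      ∀ (H : Finset (ZMod n)) (μ : ZMod n → ZMod n), IsConfig n k H μ → ∀ f : ZMod n → ℝ,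
        (nsq f - nsq ((stepFree p q)^[K * n] f))
            + ∑ z ∈ H, nsq (fun x => f (x + (μ z - z)) - f x)
          ≤ C * (nsq f - nsq ((stepHub p q a μ)^[K * n] f)) := by
  have hv : 0 < p - q := by linarith
  have hpq1 : p + q ≤ 1 := by linarith
  obtain ⟨K, hK⟩ := exists_nat_ge ((1 + (1 + p / (p - q))) / (p - q))
  rw [div_le_iff₀ hv, mul_comm] at hK
  have hK1 : 1 ≤ K := by
    rcases Nat.eq_zero_or_pos K with rfl | h
    · exfalso
      have : 0 < p / (p - q) := by positivity
      push_cast at hK; linarith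
    · exact h
  have hmin : 0 < min (p * q) (q * a) := lt_min (by positivity) (by positivity)
  set C1 := 4 * ((2:ℝ) ^ (2 * k + 2) / min (p * q) (q * a)) with hC1
  have hC1pos : 0 < C1 := by positivity
  set C3 := ((2 * k : ℕ) : ℝ) * (2 * K + 2 * (1 + p / (p - q)) / (p - q) + 2) with hC3
  have hC3pos : 0 ≤ C3 := by positivity
  set C4 := (12 + 4 * C3) * C1 with hC4
  have hC4pos : 0 < C4 := by positivity
  set C5 := 3 * (C1 + 2 * (C3 ^ 2 * C1)) with hC5
  set C6 := (p - q) * C5 + (p - q) * K * (4 * C4) with hC6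
  have hC6pos : 0 ≤ C6 := by positivity
  refine ⟨C4 + (2 * k : ℕ) * C6, by positivity, K, hK1, ?_⟩
  intro n _ hn H μ hc f
  obtain ⟨hcard, hmem, hinv, -, hoff⟩ := id hc
  set fs : ℕ → ZMod n → ℝ := fun t => (stepHub p q a μ)^[t] f with hfs
  set bs : ℕ → ZMod n → ℝ := fun t => (stepFree p q)^[t] f with hbs
  set e : ℕ → ZMod n → ℝ := fun t y => fs t y - bs t y with he
  set S : ℕ → ZMod n → ℝ := fun t y => a * (fs t (μ y) - fs t y) with hS
  set Δ := nsq f - nsq (fs (K * n)) with hΔ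
  have hstep : ∀ t, gradSq (fs t) + hubSq μ (fs t) ≤ C1 * (nsq (fs t) - nsq (fs (t + 1))) := by
    intro t
    have := gradSq_add_hubSq_le hp hq ha hpqa hn hc (fs t)
    simpa only [hfs, Function.iterate_succ_apply'] using this
  have htot : ∑ t ∈ Finset.range (K * n), gradSq (fs t)
      + ∑ t ∈ Finset.range (K * n), hubSq μ (fs t) ≤ C1 * Δ := by
    rw [← Finset.sum_add_distrib]
    refine (Finset.sum_le_sum fun t _ => hstep t).trans_eq ?_
    rw [← Finset.mul_sum, Finset.sum_range_sub' (fun t => nsq (fs t))]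
    rfl
  have hG0 : 0 ≤ ∑ t ∈ Finset.range (K * n), gradSq (fs t) :=
    Finset.sum_nonneg fun t _ => Finset.sum_nonneg fun y _ => sq_nonneg _
  have hU0 : 0 ≤ ∑ t ∈ Finset.range (K * n), hubSq μ (fs t) :=
    Finset.sum_nonneg fun t _ => Finset.sum_nonneg fun y _ => sq_nonneg _
  have hY : ∑ t ∈ Finset.range (K * n), nsq (S t) ≤ C1 * Δ := by
    have : ∑ t ∈ Finset.range (K * n), nsq (S t)
        ≤ ∑ t ∈ Finset.range (K * n), hubSq μ (fs t) := by
      refine Finset.sum_le_sum fun t _ => Finset.sum_le_sum fun y _ => ?_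
      simp only [hS]
      rw [mul_pow]
      refine mul_le_of_le_one_left (sq_nonneg _) ?_
      exact pow_le_one₀ ha.le (by linarith)
    linarith
  obtain ⟨hX, hE⟩ := driven_bound (n := n) hq hpq hpq1 H K e S
    (fun y => by simp [he, hfs, hbs])
    (fun t y => by
      simp only [he, hfs, hbs, hS, Function.iterate_succ_apply', stepHub, stepFree]; ring)
    (fun t y hy => by simp [hS, hoff y hy]) C3 (by rw [hC3, hcard])
  set X := ∑ t ∈ Finset.range (K * n), ∑ y ∈ H, e (t + 1) y ^ 2 with hXdef
  have hX' : X ≤ C3 ^ 2 * (C1 * Δ) := hX.trans (mul_le_mul_of_nonneg_left hY (by positivity))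
  have hE' := hE.trans (mul_le_mul_of_nonneg_left hY (by positivity : 0 ≤ 2 * C3))
  set Df := ∑ t ∈ Finset.range (K * n), dissFree p q (bs t) with hDf
  have hDfle : Df ≤ C4 * Δ := by
    have h1 : Df ≤ ∑ t ∈ Finset.range (K * n),
        (12 * gradSq (fs t) + 2 * dissFree p q (e t)) := by
      refine Finset.sum_le_sum fun t _ => ?_
      have h2 := dissFree_sub_le hp.le hq.le hpq1 (fs t) (e t)
      have h3 : (fun x => fs t x - e t x) = bs t := by funext x; simp [he]
      rw [h3] at h2
      linarith [dissFree_le_gradSq hp.le hq.le hpq1 (fs t)]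
    rw [Finset.sum_add_distrib, ← Finset.mul_sum, ← Finset.mul_sum] at h1
    rw [hC4]; linarith
  have hpt : ∀ z ∈ H, ∑ t ∈ Finset.range (K * n), e t z ^ 2 ≤ X := by
    intro z hz
    have h6 := Finset.sum_range_succ' (fun t => e t z ^ 2) (K * n)
    rw [Finset.sum_range_succ] at h6
    have h7 : e 0 z = 0 := by simp [he, hfs, hbs]
    rw [h7] at h6
    have h8 : ∑ t ∈ Finset.range (K * n), e (t + 1) z ^ 2 ≤ X :=
      Finset.sum_le_sum fun t _ => Finset.single_le_sum (f := fun y => e (t + 1) y ^ 2)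
        (fun y _ => sq_nonneg _) hz
    linarith [sq_nonneg (e (K * n) z)]
  have hjump : ∀ z ∈ H, nsq (fun x => f (x + (μ z - z)) - f x) ≤ C6 * Δ := by
    intro z hz
    set d := μ z - z with hd
    have hiter : ∀ t, (stepFree p q)^[t] (fun x => f (x + d) - f x) =
        fun x => bs t (x + d) - bs t x := by
      intro t
      induction t with
      | zero => rfl
      | succ t ih =>
        rw [Function.iterate_succ_apply', ih, stepFree_shift]
        simp only [hbs, Function.iterate_succ_apply']
    have hob := observability (n := n) hq hpq hpq1 K hK (fun x => f (x + d) - f x) z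
    simp only [hiter] at hob
    have h1 : ∑ t ∈ Finset.range (K * n), (bs t (z + d) - bs t z) ^ 2 ≤ C5 * Δ := by
      have h2 : ∑ t ∈ Finset.range (K * n), (bs t (z + d) - bs t z) ^ 2 ≤
          ∑ t ∈ Finset.range (K * n),
            (3 * hubSq μ (fs t) + 3 * e t (μ z) ^ 2 + 3 * e t z ^ 2) := by
        refine Finset.sum_le_sum fun t _ => ?_
        have h3 : (fs t (μ z) - fs t z) ^ 2 ≤ hubSq μ (fs t) :=
          Finset.single_le_sum (f := fun x => (fs t (μ x) - fs t x) ^ 2)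
            (fun y _ => sq_nonneg _) (Finset.mem_univ z)
        have h4 : bs t (z + d) - bs t z = (fs t (μ z) - fs t z) - e t (μ z) + e t z := by
          rw [hd, add_sub_cancel]; simp only [he]; ring
        rw [h4]
        have h5 := sq_sub_add_le (fs t (μ z) - fs t z) (e t (μ z)) (e t z)
        linarith only [h3, h5]
      simp only [Finset.sum_add_distrib, ← Finset.mul_sum] at h2
      have h5 := hpt z hz
      have h6 := hpt (μ z) (hmem z hz)
      rw [hC5]; linarith
    have h7 : ∑ t ∈ Finset.range (K * n), dissFree p q (fun x => bs t (x + d) - bs t x)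
        ≤ 4 * C4 * Δ := by
      have h8 : ∑ t ∈ Finset.range (K * n), dissFree p q (fun x => bs t (x + d) - bs t x)
          ≤ ∑ t ∈ Finset.range (K * n), 4 * dissFree p q (bs t) := by
        refine Finset.sum_le_sum fun t _ => ?_
        have := dissFree_sub_le hp.le hq.le hpq1 (fun x => bs t (x + d)) (bs t)
        rw [dissFree_shift] at this
        linarith
      rw [← Finset.mul_sum] at h8
      linarith
    have h9 := mul_le_mul_of_nonneg_left h1 hv.le
    have h10 := mul_le_mul_of_nonneg_left h7 (by positivity : 0 ≤ (p - q) * K)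
    rw [hC6]; linarith
  have hsum : ∑ z ∈ H, nsq (fun x => f (x + (μ z - z)) - f x) ≤ (2 * k : ℕ) * (C6 * Δ) := by
    refine (Finset.sum_le_sum hjump).trans_eq ?_
    rw [Finset.sum_const, hcard, nsmul_eq_mul]
  have hfree : nsq f - nsq ((stepFree p q)^[K * n] f) = Df := nsq_sub_iterate_stepFree p q f _
  rw [hfree]
  linarith

/-! ### Fourier analysis on the cycle -/

section Fourier

variable {n : ℕ} [NeZero n]

/-- Unnormalised Fourier transform of a real function on the cycle. -/
def ft (f : ZMod n → ℝ) (ξ : ZMod n) : ℂ := ∑ x, (f x : ℂ) * ZMod.stdAddChar (ξ * x)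

/-- Eigenvalue of the free walk at frequency `ξ`. -/
def freeEig (p q : ℝ) (ξ : ZMod n) : ℂ :=
  p * ZMod.stdAddChar ξ + q * ZMod.stdAddChar (-ξ) + (1 - p - q : ℝ)

/-- Parseval for a trigonometric polynomial with distinct frequencies `b i`. -/
lemma sum_norm_sq_trig {ι : Type*} (s : Finset ι) (b : ι → ZMod n)
    (hb : Set.InjOn b s) (c : ι → ℝ) :
    ∑ d : ZMod n, ‖∑ i ∈ s, (c i : ℂ) * ZMod.stdAddChar (d * b i)‖ ^ 2
      = n * ∑ i ∈ s, c i ^ 2 := by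
  have h1 : ∀ d : ZMod n,
      ((‖∑ i ∈ s, (c i : ℂ) * ZMod.stdAddChar (d * b i)‖ ^ 2 : ℝ) : ℂ)
        = ∑ i ∈ s, ∑ j ∈ s, (c i : ℂ) * c j * ZMod.stdAddChar (d * (b i - b j)) := by
    intro d
    push_cast
    rw [← Complex.mul_conj', map_sum, Finset.sum_mul_sum]
    refine Finset.sum_congr rfl fun i _ => Finset.sum_congr rfl fun j _ => ?_
    rw [map_mul (starRingEnd ℂ), Complex.conj_ofReal, ← AddChar.map_neg_eq_conj,
      show d * (b i - b j) = d * b i + -(d * b j) by ring, AddChar.map_add_eq_mul]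
    ring
  have h2 : ((∑ d : ZMod n, ‖∑ i ∈ s, (c i : ℂ) * ZMod.stdAddChar (d * b i)‖ ^ 2 : ℝ) : ℂ)
      = ((n * ∑ i ∈ s, c i ^ 2 : ℝ) : ℂ) := by
    rw [Complex.ofReal_sum]
    simp only [h1]
    rw [Finset.sum_comm]
    push_cast
    rw [Finset.mul_sum]
    refine Finset.sum_congr rfl fun i hi => ?_
    rw [Finset.sum_comm]
    rw [Finset.sum_eq_single i]
    · simp only [sub_self, mul_zero, AddChar.map_zero_eq_one, mul_one, Finset.sum_const,
        Finset.card_univ, ZMod.card, nsmul_eq_mul]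
      ring
    · intro j hj hij
      rw [← Finset.mul_sum, AddChar.sum_mulShift _ (ZMod.isPrimitive_stdAddChar n)]
      have : b i - b j ≠ 0 := fun h => hij (hb hj hi (sub_eq_zero.mp h).symm)
      simp [this]
    · intro h; exact absurd hi h
  exact_mod_cast h2

lemma parseval (f : ZMod n → ℝ) : ∑ ξ, ‖ft f ξ‖ ^ 2 = n * nsq f :=
  sum_norm_sq_trig Finset.univ id (Set.injOn_id _) f

lemma ft_zero (f : ZMod n → ℝ) : ft f 0 = ((∑ x, f x : ℝ) : ℂ) := by
  simp [ft]

lemma norm_ft_le (f : ZMod n → ℝ) (ξ : ZMod n) : ‖ft f ξ‖ ≤ ∑ x, |f x| := by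
  refine (norm_sum_le _ _).trans_eq ?_
  refine Finset.sum_congr rfl fun x _ => ?_
  rw [norm_mul, AddChar.norm_apply, mul_one, Complex.norm_real, Real.norm_eq_abs]

lemma ft_shift (f : ZMod n → ℝ) (d ξ : ZMod n) :
    ft (fun x => f (x + d)) ξ = ZMod.stdAddChar (-(ξ * d)) * ft f ξ := by
  unfold ft
  conv_rhs => rw [← Equiv.sum_comp (Equiv.addRight d)]
  rw [Finset.mul_sum]
  refine Finset.sum_congr rfl fun x _ => ?_
  rw [mul_left_comm, ← AddChar.map_add_eq_mul]
  congr 2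
  simp only [Equiv.coe_addRight]; ring

lemma ft_stepFree (p q : ℝ) (f : ZMod n → ℝ) (ξ : ZMod n) :
    ft (stepFree p q f) ξ = freeEig p q ξ * ft f ξ := by
  have h1 := ft_shift f 1 ξ
  have h2 := ft_shift f (-1) ξ
  have h : ft (stepFree p q f) ξ = p * ft (fun x => f (x + -1)) ξ + q * ft (fun x => f (x + 1)) ξ
      + (1 - p - q : ℝ) * ft f ξ := by
    simp only [ft, Finset.mul_sum, ← Finset.sum_add_distrib]
    refine Finset.sum_congr rfl fun x _ => ?_
    simp only [stepFree, ← sub_eq_add_neg]; push_cast; ring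
  rw [h, h1, h2]
  simp only [mul_one, mul_neg, neg_neg, freeEig]; ring

lemma ft_iterate_stepFree (p q : ℝ) (f : ZMod n → ℝ) (ξ : ZMod n) (T : ℕ) :
    ft ((stepFree p q)^[T] f) ξ = freeEig p q ξ ^ T * ft f ξ := by
  induction T with
  | zero => simp
  | succ T ih => rw [Function.iterate_succ_apply', ft_stepFree, ih]; ring

/-- Fourier multiplier of the dissipation lower bound: free dissipation over time `K n`
plus the non-invariance of the mode `ξ` under the jumps. -/
def rate (p q : ℝ) (K : ℕ) (H : Finset (ZMod n)) (μ : ZMod n → ZMod n) (ξ : ZMod n) : ℝ :=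
  (1 - (‖freeEig p q ξ‖ ^ 2) ^ (K * n))
    + ∑ z ∈ H, ‖(ZMod.stdAddChar (ξ * (μ z - z)) : ℂ) - 1‖ ^ 2

lemma sum_rate (p q : ℝ) (K : ℕ) (H : Finset (ZMod n)) (μ : ZMod n → ZMod n)
    (f : ZMod n → ℝ) :
    ∑ ξ, rate p q K H μ ξ * ‖ft f ξ‖ ^ 2 =
      n * ((nsq f - nsq ((stepFree p q)^[K * n] f))
            + ∑ z ∈ H, nsq (fun x => f (x + (μ z - z)) - f x)) := by
  have h1 : ∀ d : ZMod n, n * nsq (fun x => f (x + d) - f x) =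
      ∑ ξ, ‖(ZMod.stdAddChar (ξ * d) : ℂ) - 1‖ ^ 2 * ‖ft f ξ‖ ^ 2 := by
    intro d
    rw [← parseval]
    refine Finset.sum_congr rfl fun ξ _ => ?_
    have h2 : ft (fun x => f (x + d) - f x) ξ
        = (ZMod.stdAddChar (-(ξ * d)) - 1) * ft f ξ := by
      rw [sub_mul, one_mul, ← ft_shift]
      simp only [ft, ← Finset.sum_sub_distrib]
      refine Finset.sum_congr rfl fun x _ => ?_
      push_cast; ring
    have h3 : ‖(ZMod.stdAddChar (-(ξ * d)) : ℂ) - 1‖ = ‖(ZMod.stdAddChar (ξ * d) : ℂ) - 1‖ := by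
      rw [AddChar.map_neg_eq_conj, ← Complex.norm_conj]; simp
    rw [h2, norm_mul, mul_pow, h3]
  rw [mul_add, mul_sub, ← parseval, ← parseval, Finset.mul_sum]
  simp only [h1]
  rw [Finset.sum_comm, ← Finset.sum_sub_distrib, ← Finset.sum_add_distrib]
  refine Finset.sum_congr rfl fun ξ _ => ?_
  rw [ft_iterate_stepFree, norm_mul, norm_pow, rate, add_mul, Finset.sum_mul]
  ring

lemma norm_stdAddChar_sub_one_ge (ξ : ZMod n) :
    4 * |(ξ.valMinAbs : ℝ)| / n ≤ ‖(ZMod.stdAddChar ξ : ℂ) - 1‖ := by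
  have hn : (0:ℝ) < n := by exact_mod_cast NeZero.pos n
  have h1 : (ZMod.stdAddChar ξ : ℂ) =
      Complex.exp (Complex.I * ((2 * Real.pi * ξ.valMinAbs / n : ℝ) : ℂ)) := by
    conv_lhs => rw [← ZMod.coe_valMinAbs ξ]
    rw [ZMod.stdAddChar_coe]
    congr 1; push_cast; ring
  rw [h1, Complex.norm_exp_I_mul_ofReal_sub_one]
  have h2 : |2 * Real.pi * (ξ.valMinAbs : ℝ) / n / 2| ≤ Real.pi / 2 := by
    have h3 : |(ξ.valMinAbs : ℝ)| ≤ n / 2 := by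
      have := ZMod.natAbs_valMinAbs_le ξ
      have h4 : (ξ.valMinAbs.natAbs : ℝ) ≤ n / 2 :=
        le_trans (by exact_mod_cast this) Nat.cast_div_le
      rwa [Nat.cast_natAbs, Int.cast_abs] at h4
    have h5 : 2 * Real.pi * (ξ.valMinAbs : ℝ) / n / 2 = Real.pi / n * ξ.valMinAbs := by
      field_simp
    rw [h5, abs_mul, abs_of_pos (by positivity)]
    calc _ ≤ Real.pi / n * (n / 2) := mul_le_mul_of_nonneg_left h3 (by positivity)
      _ = _ := by field_simp
  have h6 := Real.mul_abs_le_abs_sin h2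
  rw [norm_mul, Real.norm_eq_abs, Real.norm_eq_abs, abs_two]
  refine le_trans (le_of_eq ?_) (mul_le_mul_of_nonneg_left h6 zero_le_two)
  have h5 : 2 * Real.pi * (ξ.valMinAbs : ℝ) / n / 2 = Real.pi / n * ξ.valMinAbs := by
    field_simp
  rw [h5, abs_mul, abs_of_pos (by positivity : 0 < Real.pi / n)]
  field_simp; ring

lemma norm_freeEig_sq_le {p q : ℝ} (hp : 0 ≤ p) (hq : 0 ≤ q) (ξ : ZMod n) :
    ‖freeEig p q ξ‖ ^ 2
      ≤ 1 - (p + q) * (1 - p - q) * ‖(ZMod.stdAddChar ξ : ℂ) - 1‖ ^ 2 := by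
  have h1 : ‖(ZMod.stdAddChar ξ : ℂ)‖ = 1 := AddChar.norm_apply _ _
  rw [freeEig, AddChar.map_neg_eq_conj]
  generalize (ZMod.stdAddChar ξ : ℂ) = z at h1 ⊢
  have h2 : z.re ^ 2 + z.im ^ 2 = 1 := by
    have := Complex.sq_norm z
    rw [h1, Complex.normSq_apply] at this; linarith
  rw [Complex.sq_norm, Complex.sq_norm, Complex.normSq_apply, Complex.normSq_apply]
  simp only [Complex.add_re, Complex.mul_re, Complex.ofReal_re, Complex.ofReal_im,
    Complex.conj_re, Complex.conj_im, Complex.add_im, Complex.mul_im, Complex.sub_re,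
    Complex.sub_im, Complex.one_re, Complex.one_im]
  have h3 : z.im ^ 2 = 1 - z.re ^ 2 := by linarith
  have h4 : 0 ≤ p * q * z.im ^ 2 := by positivity
  nlinarith

/-- Free dissipation over time `K n ≥ n`: with `x = 16 (p + q) (1 - p - q) ξ² / n` it is at
least `x / (1 + x)`, with `ξ` represented in `(-n/2, n/2]`. -/
lemma free_rate_ge {p q : ℝ} (hp : 0 ≤ p) (hq : 0 ≤ q) (hpq : p + q ≤ 1) {K : ℕ} (hK : 1 ≤ K)
    (ξ : ZMod n) (x : ℝ)
    (hx : x = 16 * ((p + q) * (1 - p - q)) * (ξ.valMinAbs : ℝ) ^ 2 / n) :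
    x / (1 + x) ≤ 1 - (‖freeEig p q ξ‖ ^ 2) ^ (K * n) := by
  have hn : (0:ℝ) < n := by exact_mod_cast NeZero.pos n
  have hr : 0 ≤ 1 - p - q := by linarith
  have hx0 : 0 ≤ x := by rw [hx]; positivity
  set m := ‖freeEig p q ξ‖ ^ 2 with hm
  have hm0 : 0 ≤ m := by positivity
  have h1 : m ≤ 1 - x / n := by
    refine (norm_freeEig_sq_le hp hq ξ).trans ?_
    have h2 := norm_stdAddChar_sub_one_ge ξ
    have h3 : (4 * |(ξ.valMinAbs : ℝ)| / n) ^ 2 ≤ ‖(ZMod.stdAddChar ξ : ℂ) - 1‖ ^ 2 :=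
      pow_le_pow_left₀ (by positivity) h2 2
    have h4 := mul_le_mul_of_nonneg_left h3 (by positivity : 0 ≤ (p + q) * (1 - p - q))
    have h5 : (p + q) * (1 - p - q) * (4 * |(ξ.valMinAbs : ℝ)| / n) ^ 2 = x / n := by
      rw [hx, div_pow, mul_pow, sq_abs]; field_simp; ring
    linarith
  have hm1 : m ≤ 1 := h1.trans (by have : 0 ≤ x / n := by positivity
                                   linarith)
  have h2 : m ≤ Real.exp (-(x / n)) := h1.trans (by linarith [Real.add_one_le_exp (-(x / n))])
  have h3 : m ^ (K * n) ≤ m ^ n :=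
    pow_le_pow_of_le_one hm0 hm1 (Nat.le_mul_of_pos_left n hK)
  have h4 : m ^ n ≤ Real.exp (-x) := by
    refine (pow_le_pow_left₀ hm0 h2 n).trans_eq ?_
    rw [← Real.exp_nat_mul]; congr 1; field_simp
  have h5 : Real.exp (-x) ≤ 1 / (1 + x) := by
    rw [Real.exp_neg, ← one_div]
    exact one_div_le_one_div_of_le (by linarith) (by linarith [Real.add_one_le_exp x])
  have h6 : x / (1 + x) = 1 - 1 / (1 + x) := by
    have : 1 + x ≠ 0 := by linarith
    field_simp; ring
  linarith

end Fourier

/-! ### Rows of the transition matrix -/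

section Rows

variable {n : ℕ} [NeZero n] {k : ℕ} {p q a : ℝ} {H : Finset (ZMod n)} {μ : ZMod n → ZMod n}

lemma sum_mul_cycleP (hc : IsConfig n k H μ) (g : ZMod n → ℝ) (y : ZMod n) :
    ∑ z, g z * cycleP n p q a H μ z y = stepHub p q a μ g y := by
  obtain ⟨-, hH, hinv, -, hout⟩ := hc
  have h1 : ∀ z : ZMod n, (y = z + 1) ↔ z = y - 1 := fun z =>
    ⟨fun h => by rw [h]; ring, fun h => by rw [h]; ring⟩
  have h2 : ∀ z : ZMod n, (y = z - 1) ↔ z = y + 1 := fun z =>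
    ⟨fun h => by rw [h]; ring, fun h => by rw [h]; ring⟩
  have h3 : ∀ z : ZMod n, (z ∈ H ∧ y = μ z) ↔ (z = μ y ∧ y ∈ H) := fun z =>
    ⟨fun h => ⟨by rw [h.2, hinv], h.2 ▸ hH z h.1⟩, fun h => ⟨h.1 ▸ hH y h.2, by rw [h.1, hinv]⟩⟩
  have h4 : ∀ z : ZMod n, (y = z) ↔ z = y := fun z => eq_comm
  simp only [cycleP, mul_add, Finset.sum_add_distrib, h1, h2, h3]
  simp only [h4]
  by_cases hy : y ∈ H
  · simp only [hy, and_true, mul_ite, mul_zero, Finset.sum_ite_eq', Finset.mem_univ, if_true]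
    simp only [stepHub, stepFree]; ring
  · simp only [hy, and_false, if_false, mul_ite, mul_zero, Finset.sum_ite_eq', Finset.mem_univ,
      if_true, Finset.sum_const_zero]
    simp only [stepHub, stepFree, hout y hy]; ring

lemma cycleP_pow_sub (hc : IsConfig n k H μ) (x y : ZMod n) (t : ℕ) :
    (cycleP n p q a H μ ^ t) x y - 1 / n
      = (stepHub p q a μ)^[t] (fun z => (if x = z then 1 else 0) - 1 / n) y := by
  induction t generalizing y with
  | zero => simp [Matrix.one_apply]
  | succ t ih =>
    rw [Function.iterate_succ_apply', ← funext ih, pow_succ, Matrix.mul_apply,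
      sum_mul_cycleP hc]
    simp only [stepHub, stepFree]; ring

lemma sum_stepHub (hc : IsConfig n k H μ) (f : ZMod n → ℝ) :
    ∑ y, stepHub p q a μ f y = ∑ y, f y := by
  have h1 := sum_sub_right f 1
  have h2 := sum_add_right f 1
  have h3 : ∑ y, f (μ y) = ∑ y, f y :=
    Equiv.sum_comp (Function.Involutive.toPerm μ hc.2.2.1) f
  simp only [stepHub, stepFree, Finset.sum_add_distrib, ← Finset.mul_sum,
    Finset.sum_sub_distrib]
  rw [h1, h2, h3]; ring

lemma sum_abs_stepHub_le (hp : 0 ≤ p) (hq : 0 ≤ q) (ha : 0 ≤ a) (hpqa : p + q + a ≤ 1)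
    (hc : IsConfig n k H μ) (f : ZMod n → ℝ) :
    ∑ y, |stepHub p q a μ f y| ≤ ∑ y, |f y| := by
  rw [← sum_stepHub (p := p) (q := q) (a := a) hc fun y => |f y|]
  refine Finset.sum_le_sum fun y _ => ?_
  have h : stepHub p q a μ f y
      = p * f (y - 1) + q * f (y + 1) + (1 - p - q - a) * f y + a * f (μ y) := by
    simp only [stepHub, stepFree]; ring
  rw [h]
  refine (abs_add_le _ _).trans ?_
  refine (add_le_add_left (abs_add_three _ _ _) _).trans_eq ?_
  have hr : 0 ≤ 1 - p - q - a := by linarith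
  rw [abs_mul, abs_mul, abs_mul, abs_mul, abs_of_nonneg hp, abs_of_nonneg hq, abs_of_nonneg hr,
    abs_of_nonneg ha]
  simp only [stepHub, stepFree]; ring

lemma sum_iterate_stepHub (hc : IsConfig n k H μ) (f : ZMod n → ℝ) (t : ℕ) :
    ∑ y, (stepHub p q a μ)^[t] f y = ∑ y, f y := by
  induction t with
  | zero => rfl
  | succ t ih => rw [Function.iterate_succ_apply', sum_stepHub hc, ih]

lemma sum_abs_iterate_stepHub_le (hp : 0 ≤ p) (hq : 0 ≤ q) (ha : 0 ≤ a) (hpqa : p + q + a ≤ 1)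
    (hc : IsConfig n k H μ) (f : ZMod n → ℝ) (t : ℕ) :
    ∑ y, |(stepHub p q a μ)^[t] f y| ≤ ∑ y, |f y| := by
  induction t with
  | zero => rfl
  | succ t ih =>
    rw [Function.iterate_succ_apply']
    exact (sum_abs_stepHub_le hp hq ha hpqa hc _).trans ih

end Rows

/-! ### A Nash inequality and the resulting decay -/

section Nash

/-- Any sequence with `u (j+1) ≤ u j - u j ^ (1 + 1/s) / M` as long as `u ≥ 1` drops below `1`
after `M s` steps, whatever its initial value: `u ^ (-1/s)` grows by at least `1 / (M s)` in
each step. -/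
lemma nash_seq {s : ℕ} (hs : s ≠ 0) {M : ℝ} (hM : 0 < M) (u w : ℕ → ℝ) (hw0 : ∀ j, 0 ≤ w j)
    (hw : ∀ j, w j ^ s = u j) (hanti : Antitone u)
    (hstep : ∀ j, 1 ≤ u j → u j * w j ≤ M * (u j - u (j + 1)))
    {J : ℕ} (hJ : M * s ≤ J) : u J ≤ 1 := by
  by_contra! hcon
  have hu : ∀ j ≤ J, 1 < u j := fun j hj => hcon.trans_le (hanti hj)
  have hw1 : ∀ j ≤ J, 1 < w j := by
    intro j hj
    by_contra! h
    have := pow_le_one₀ (n := s) (hw0 j) h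
    rw [hw] at this
    exact absurd (hu j hj) (not_lt.mpr this)
  have hsp : (0 : ℝ) < s := by exact_mod_cast Nat.pos_of_ne_zero hs
  have hMs : 0 < M * s := by positivity
  have key : ∀ j ≤ J, (j : ℝ) / (M * s) < (w j)⁻¹ := by
    intro j
    induction j with
    | zero => intro h; simpa using lt_trans one_pos (hw1 0 h)
    | succ j ih =>
      intro hj
      have h1 := ih (by omega)
      have ha := hw1 j (by omega)
      have hb := hw1 (j + 1) hj
      set x := w j with hx
      set y := w (j + 1) with hy
      have hx0 : 0 < x := by linarith
      have hy0 : 0 < y := by linarith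
      have hstepj := hstep j (hu j (by omega)).le
      rw [← hw j, ← hw (j + 1), ← hx, ← hy] at hstepj
      have hyx : y ≤ x := by
        have : y ^ s ≤ x ^ s := by rw [hx, hy, hw, hw]; exact hanti (Nat.le_succ j)
        exact le_of_pow_le_pow_left₀ hs hx0.le this
      have hbern := one_add_mul_le_pow (a := y / x - 1) (by
        have : 0 ≤ y / x := by positivity
        linarith) s
      rw [add_sub_cancel, div_pow, le_div_iff₀ (by positivity)] at hbern
      have h2 : x ≤ M * s * (1 - y / x) := by
        have hxs : 0 < x ^ s := by positivity
        have : x ^ s * x ≤ x ^ s * (M * s * (1 - y / x)) := by nlinarith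
        exact le_of_mul_le_mul_left this hxs
      have h3 : 1 / (M * s) ≤ y⁻¹ - x⁻¹ := by
        rw [div_le_iff₀ hMs]
        have h4 : y⁻¹ - x⁻¹ = (1 - y / x) / y := by field_simp
        rw [h4, div_mul_eq_mul_div, le_div_iff₀ hy0]
        linarith
      push_cast
      rw [add_div]; linarith
  have h1 := key J le_rfl
  have h2 : 1 ≤ (J : ℝ) / (M * s) := by rw [le_div_iff₀ hMs]; linarith
  have h3 : (w J)⁻¹ < 1 := inv_lt_one_of_one_lt₀ (hw1 J le_rfl)
  linarith

variable {n : ℕ} [NeZero n]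

lemma norm_freeEig_le_one {p q : ℝ} (hp : 0 ≤ p) (hq : 0 ≤ q) (hpq : p + q ≤ 1) (ξ : ZMod n) :
    ‖freeEig p q ξ‖ ≤ 1 := by
  have h := norm_freeEig_sq_le hp hq ξ
  have h2 : 0 ≤ (p + q) * (1 - p - q) * ‖(ZMod.stdAddChar ξ : ℂ) - 1‖ ^ 2 :=
    mul_nonneg (mul_nonneg (by linarith) (by linarith)) (sq_nonneg _)
  exact (sq_le_one_iff₀ (norm_nonneg _)).mp (by linarith)

lemma rate_nonneg {p q : ℝ} (hp : 0 ≤ p) (hq : 0 ≤ q) (hpq : p + q ≤ 1) (K : ℕ)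
    (H : Finset (ZMod n)) (μ : ZMod n → ZMod n) (ξ : ZMod n) : 0 ≤ rate p q K H μ ξ := by
  have h1 := norm_freeEig_le_one hp hq hpq ξ
  have h2 : (‖freeEig p q ξ‖ ^ 2) ^ (K * n) ≤ 1 :=
    pow_le_one₀ (by positivity) (pow_le_one₀ (norm_nonneg _) h1)
  have h3 : 0 ≤ ∑ z ∈ H, ‖(ZMod.stdAddChar (ξ * (μ z - z)) : ℂ) - 1‖ ^ 2 :=
    Finset.sum_nonneg fun _ _ => by positivity
  unfold rate; linarith

/-- The resolvent-type sum over nonzero frequencies which controls mixing at scale `m`. -/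
def zsum (k : ℕ) (m p q : ℝ) (K : ℕ) (H : Finset (ZMod n)) (μ : ZMod n → ZMod n) : ℝ :=
  ∑ ξ ∈ Finset.univ.erase (0 : ZMod n), 1 / (1 + m * rate p q K H μ ξ) ^ (k + 1)

/-- Nash inequality for weights `r`: a mean-zero `f` with `‖f‖₁ ≤ 2` has `|ft f|² ≤ 4`, so the
frequencies of small rate carry little mass when the resolvent sum is small. -/
lemma nash_ineq {s : ℕ} {m : ℝ} (hm : 0 < m) (r : ZMod n → ℝ) (hr : ∀ ξ, 0 ≤ r ξ)
    (hZ : ∑ ξ ∈ Finset.univ.erase (0 : ZMod n), 1 / (1 + m * r ξ) ^ s ≤ 1 / (8 * 2 ^ s))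
    (f : ZMod n → ℝ) (hf0 : ∑ x, f x = 0) (hf : ∑ x, |f x| ≤ 2) {w : ℝ} (hw : 1 ≤ w)
    (hwu : w ^ s = n * nsq f) :
    (n * nsq f) * w ≤ 2 * m * ∑ ξ, r ξ * ‖ft f ξ‖ ^ 2 := by
  have hft0 : ft f 0 = 0 := by rw [ft_zero, hf0]; simp
  have hft : ∀ ξ, ‖ft f ξ‖ ^ 2 ≤ 4 := fun ξ => by
    have := (norm_ft_le f ξ).trans hf
    nlinarith [norm_nonneg (ft f ξ)]
  have hP := parseval f
  set u := n * nsq f with hu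
  have hu0 : 0 ≤ u := mul_nonneg (Nat.cast_nonneg n) (nsq_nonneg f)
  have hterm : ∀ ξ, w * (‖ft f ξ‖ ^ 2)
      ≤ m * (r ξ * ‖ft f ξ‖ ^ 2)
        + if ξ = 0 then 0 else w * (4 * (2 * w) ^ s * (1 / (1 + m * r ξ) ^ s)) := by
    intro ξ
    split_ifs with h0
    · simp [h0, hft0]
    · have hp1 : 0 < 1 + m * r ξ := by have := mul_nonneg hm.le (hr ξ); linarith
      by_cases hcase : 1 + m * r ξ ≤ 2 * w
      · have h1 : 1 ≤ (2 * w) ^ s * (1 / (1 + m * r ξ) ^ s) := by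
          rw [mul_one_div, le_div_iff₀ (by positivity), one_mul]
          exact pow_le_pow_left₀ hp1.le hcase s
        have h2 : 0 ≤ m * (r ξ * ‖ft f ξ‖ ^ 2) :=
          mul_nonneg hm.le (mul_nonneg (hr ξ) (sq_nonneg _))
        have h3 : w * ‖ft f ξ‖ ^ 2 ≤ w * (4 * ((2 * w) ^ s * (1 / (1 + m * r ξ) ^ s))) :=
          mul_le_mul_of_nonneg_left ((hft ξ).trans (by linarith)) (by linarith)
        rw [← mul_assoc 4] at h3
        linarith
      · have h1 : w ≤ m * r ξ := by linarith
        have h2 := mul_le_mul_of_nonneg_right h1 (sq_nonneg ‖ft f ξ‖)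
        have h3 : 0 ≤ w * (4 * (2 * w) ^ s * (1 / (1 + m * r ξ) ^ s)) := by positivity
        linarith
  have hsum := Finset.sum_le_sum fun ξ (_ : ξ ∈ (Finset.univ : Finset (ZMod n))) => hterm ξ
  rw [Finset.sum_add_distrib, ← Finset.mul_sum, ← Finset.mul_sum, hP] at hsum
  have h5 : (∑ ξ : ZMod n, if ξ = 0 then (0:ℝ)
        else w * (4 * (2 * w) ^ s * (1 / (1 + m * r ξ) ^ s)))
      = w * (4 * (2 * w) ^ s) * ∑ ξ ∈ Finset.univ.erase (0 : ZMod n), 1 / (1 + m * r ξ) ^ s := by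
    rw [Finset.mul_sum, ← Finset.add_sum_erase _ _ (Finset.mem_univ (0 : ZMod n)), if_pos rfl,
      zero_add]
    refine Finset.sum_congr rfl fun ξ hξ => ?_
    rw [if_neg (Finset.ne_of_mem_erase hξ), mul_assoc w]
  have h6 : w * (4 * (2 * w) ^ s) * ∑ ξ ∈ Finset.univ.erase (0 : ZMod n), 1 / (1 + m * r ξ) ^ s
      ≤ w * u / 2 := by
    refine (mul_le_mul_of_nonneg_left hZ (by positivity)).trans_eq ?_
    rw [mul_pow, hwu]; field_simp; ring
  rw [h5] at hsum
  linarith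

/-- Spectral gap: smallness of the resolvent sum forces `m r ξ > 1` for every `ξ ≠ 0`. -/
lemma gap_ineq {s : ℕ} {m : ℝ} (hm : 0 < m) (r : ZMod n → ℝ) (hr : ∀ ξ, 0 ≤ r ξ)
    (hZ : ∑ ξ ∈ Finset.univ.erase (0 : ZMod n), 1 / (1 + m * r ξ) ^ s ≤ 1 / (8 * 2 ^ s))
    (f : ZMod n → ℝ) (hf0 : ∑ x, f x = 0) :
    n * nsq f ≤ m * ∑ ξ, r ξ * ‖ft f ξ‖ ^ 2 := by
  rw [← parseval, Finset.mul_sum]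
  refine Finset.sum_le_sum fun ξ _ => ?_
  by_cases h0 : ξ = 0
  · have hft0 : ft f 0 = 0 := by rw [ft_zero, hf0]; simp
    simp [h0, hft0]
  · have hp1 : ∀ ξ, 0 < 1 + m * r ξ := fun ξ => by
      have := mul_nonneg hm.le (hr ξ); linarith
    have h1 : 1 / (1 + m * r ξ) ^ s ≤ 1 / (8 * 2 ^ s) :=
      (Finset.single_le_sum (f := fun ξ => 1 / (1 + m * r ξ) ^ s)
        (fun η _ => by have := hp1 η; positivity)
        (Finset.mem_erase.mpr ⟨h0, Finset.mem_univ ξ⟩)).trans hZ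
    have h2 : 8 * 2 ^ s ≤ (1 + m * r ξ) ^ s :=
      (one_div_le_one_div (pow_pos (hp1 ξ) s) (by positivity)).mp h1
    have h3 : 2 ≤ 1 + m * r ξ := by
      by_contra! h
      have := pow_le_pow_left₀ (hp1 ξ).le h.le s
      have : (0:ℝ) < 2 ^ s := by positivity
      linarith
    rw [← mul_assoc]
    exact le_mul_of_one_le_left (sq_nonneg _) (by linarith)

end Nash

section Decay

variable {n : ℕ} [NeZero n]

/-- Mixing from the energy inequality and smallness of the resolvent sum: `J` blocks of length
`K n` bring `n ‖P^t(x,·) - 1/n‖₂²` from at most `n` to at most `1` by the Nash inequality, and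
`j` further blocks bring it below `ε²` by the spectral gap. -/
theorem mixedBy_of_zsum {k : ℕ} {p q a : ℝ} (hp : 0 < p) (hq : 0 < q) (ha : 0 < a)
    (hpqa : p + q + a ≤ 1) {C : ℝ} (hC : 0 < C) {K : ℕ}
    {H : Finset (ZMod n)} {μ : ZMod n → ZMod n} (hc : IsConfig n k H μ)
    (hE : ∀ f : ZMod n → ℝ, (nsq f - nsq ((stepFree p q)^[K * n] f))
            + ∑ z ∈ H, nsq (fun x => f (x + (μ z - z)) - f x)
          ≤ C * (nsq f - nsq ((stepHub p q a μ)^[K * n] f)))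
    {m : ℝ} (hm : 0 < m) (hZ : zsum k m p q K H μ ≤ 1 / (8 * 2 ^ (k + 1)))
    {ε : ℝ} (hε : 0 < ε) {J j : ℕ} (hJ : 2 * m * C * (k + 1 : ℕ) ≤ J)
    (hj : 2 * (m * C) * Real.log (1 / ε) ≤ j) :
    mixedBy n (cycleP n p q a H μ) ε (K * n * (J + j)) := by
  intro x
  simp only [cycleP_pow_sub hc, Function.iterate_mul _ (K * n)]
  have hn : (0:ℝ) < n := by exact_mod_cast NeZero.pos n
  set f₀ : ZMod n → ℝ := fun z => (if x = z then 1 else 0) - 1 / n with hf₀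
  set A := (stepHub p q a μ)^[K * n] with hA
  have hf₀sum : ∑ z, f₀ z = 0 := by
    simp only [hf₀, Finset.sum_sub_distrib, Finset.sum_ite_eq, Finset.mem_univ, if_true,
      Finset.sum_const, Finset.card_univ, ZMod.card, nsmul_eq_mul]
    field_simp; ring
  have hf₀abs : ∑ z, |f₀ z| ≤ 2 := by
    have h1 : ∀ z, |f₀ z| ≤ (if x = z then 1 else 0) + 1 / n := by
      intro z
      refine (abs_sub _ _).trans_eq ?_
      rw [abs_of_nonneg (by split_ifs <;> norm_num), abs_of_nonneg (by positivity)]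
    refine (Finset.sum_le_sum fun z _ => h1 z).trans_eq ?_
    simp only [Finset.sum_add_distrib, Finset.sum_ite_eq, Finset.mem_univ, if_true,
      Finset.sum_const, Finset.card_univ, ZMod.card, nsmul_eq_mul]
    field_simp; ring
  have hiter : ∀ i, A^[i] f₀ = (stepHub p q a μ)^[K * n * i] f₀ := fun i => by
    rw [Function.iterate_mul]
  have hsum : ∀ i, ∑ z, (A^[i] f₀) z = 0 := fun i => by
    rw [hiter, sum_iterate_stepHub hc, hf₀sum]
  have habs : ∀ i, ∑ z, |(A^[i] f₀) z| ≤ 2 := fun i => by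
    rw [hiter]
    exact (sum_abs_iterate_stepHub_le hp.le hq.le ha.le hpqa hc _ _).trans hf₀abs
  have hrate := rate_nonneg hp.le hq.le (by linarith : p + q ≤ 1) K H μ
  set u : ℕ → ℝ := fun i => n * nsq (A^[i] f₀) with hu
  have hu0 : ∀ i, 0 ≤ u i := fun i => mul_nonneg hn.le (nsq_nonneg _)
  have hdiss : ∀ i, ∑ ξ, rate p q K H μ ξ * ‖ft (A^[i] f₀) ξ‖ ^ 2 ≤ C * (u i - u (i + 1)) := by
    intro i
    rw [sum_rate]
    have h1 := mul_le_mul_of_nonneg_left (hE (A^[i] f₀)) hn.le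
    refine h1.trans_eq ?_
    simp only [hu, Function.iterate_succ_apply' A]
    ring
  have hgap : ∀ i, u i ≤ m * C * (u i - u (i + 1)) := by
    intro i
    refine (gap_ineq hm _ hrate hZ _ (hsum i)).trans ?_
    rw [mul_assoc]
    exact mul_le_mul_of_nonneg_left (hdiss i) hm.le
  have hmC : 0 < m * C := mul_pos hm hC
  have hanti : Antitone u := antitone_nat_of_succ_le fun i => by
    have h1 := (hu0 i).trans (hgap i)
    have h2 := nonneg_of_mul_nonneg_right h1 hmC
    linarith
  have hk0 : (k + 1 : ℕ) ≠ 0 := Nat.succ_ne_zero k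
  have hw : ∀ i, (u i ^ (((k + 1 : ℕ) : ℝ)⁻¹)) ^ (k + 1) = u i := fun i =>
    Real.rpow_inv_natCast_pow (hu0 i) hk0
  have hJ1 : u J ≤ 1 := by
    refine nash_seq hk0 (M := 2 * m * C) (by positivity) u _
      (fun i => Real.rpow_nonneg (hu0 i) _) hw hanti (fun i hi => ?_) hJ
    refine (nash_ineq hm _ hrate hZ _ (hsum i) (habs i)
      (Real.one_le_rpow hi (by positivity)) (hw i)).trans ?_
    rw [mul_assoc _ C]
    exact mul_le_mul_of_nonneg_left (hdiss i) (by positivity)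
  have hstep : ∀ i, u (i + 1) ≤ Real.exp (-(1 / (m * C))) * u i := by
    intro i
    have h1 : u (i + 1) ≤ (1 - 1 / (m * C)) * u i := by
      have h2 := hgap i
      have h3 : u i / (m * C) ≤ u i - u (i + 1) := by
        rw [div_le_iff₀ hmC]; linarith
      have h4 : (1 - 1 / (m * C)) * u i = u i - u i / (m * C) := by ring
      linarith
    refine h1.trans (mul_le_mul_of_nonneg_right ?_ (hu0 i))
    linarith [Real.add_one_le_exp (-(1 / (m * C)))]
  have hdecay : ∀ i, u (J + i) ≤ Real.exp (-(1 / (m * C))) ^ i := by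
    intro i
    induction i with
    | zero => simpa using hJ1
    | succ i ih =>
      rw [← add_assoc, pow_succ']
      exact (hstep _).trans (mul_le_mul_of_nonneg_left ih (Real.exp_pos _).le)
  have hfin : u (J + j) ≤ ε ^ 2 := by
    refine (hdecay j).trans ?_
    rw [← Real.exp_nat_mul, ← Real.exp_log (pow_pos hε 2)]
    refine Real.exp_le_exp.mpr ?_
    rw [Real.log_pow]
    rw [one_div, Real.log_inv] at hj
    have : 2 * -Real.log ε ≤ j / (m * C) := by rw [le_div_iff₀ hmC]; linarith
    rw [show (j : ℝ) * -(1 / (m * C)) = -(j / (m * C)) by ring]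
    push_cast
    linarith
  have hcs : (∑ z, |(A^[J + j] f₀) z|) ^ 2 ≤ u (J + j) := by
    have h1 := sq_sum_le_card_mul_sum_sq (s := (Finset.univ : Finset (ZMod n)))
      (f := fun z => |(A^[J + j] f₀) z|)
    simp only [Finset.card_univ, ZMod.card, sq_abs] at h1
    exact h1
  have h2 : ∑ z, |(A^[J + j] f₀) z| ≤ ε :=
    le_of_sq_le_sq (hcs.trans hfin) hε.le
  have h3 : 0 ≤ ∑ z, |(A^[J + j] f₀) z| := Finset.sum_nonneg fun _ _ => abs_nonneg _
  linarith

end Decay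

/-! ### Averaging the jump lengths -/

section Averages

variable {n : ℕ} [NeZero n]

/-- Damping of the mode `ξ` by a jump of length `d`. -/
def damp (m : ℝ) (ξ d : ZMod n) : ℝ := 1 / (1 + m * ‖(ZMod.stdAddChar (ξ * d) : ℂ) - 1‖ ^ 2)

lemma damp_nonneg {m : ℝ} (hm : 0 ≤ m) (ξ d : ZMod n) : 0 ≤ damp m ξ d := by
  unfold damp; positivity

/-- On the unit circle the Lorentzian `1 / (1 + |z - 1|² / τ²)` is at most a multiple of the
Poisson-type kernel `1 / |1 - ρ z|²` with `ρ = 1 - τ`; for `z ^ D = 1` the latter is a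
trigonometric polynomial of degree less than `D`. -/
lemma lorentz_le {τ : ℝ} (hτ0 : 0 < τ) (hτ1 : τ ≤ 1) {z : ℂ} (hz : ‖z‖ = 1) {D : ℕ}
    (hD : 1 ≤ τ * D) (hzD : z ^ D = 1) :
    1 / (1 + (1 / τ ^ 2) * ‖z - 1‖ ^ 2)
      ≤ 4 * τ ^ 2 * ‖∑ l ∈ Finset.range D, (((1 - τ) ^ l : ℝ) : ℂ) * z ^ l‖ ^ 2 := by
  set ρ := 1 - τ with hρ
  have hρ0 : 0 ≤ ρ := by linarith
  have hz2 : z.re ^ 2 + z.im ^ 2 = 1 := by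
    have := Complex.sq_norm z
    rw [hz, Complex.normSq_apply] at this; linarith
  have h1 : ‖1 - ρ * z‖ ^ 2 ≤ τ ^ 2 + ‖z - 1‖ ^ 2 := by
    rw [Complex.sq_norm, Complex.sq_norm, Complex.normSq_apply, Complex.normSq_apply]
    simp only [Complex.sub_re, Complex.sub_im, Complex.one_re, Complex.one_im, Complex.mul_re,
      Complex.mul_im, Complex.ofReal_re, Complex.ofReal_im]
    have h3 : z.im ^ 2 = 1 - z.re ^ 2 := by linarith
    have h4 : z.re ≤ 1 := by nlinarith [sq_nonneg z.im]
    have h5 : 0 ≤ τ * (1 - z.re) := mul_nonneg hτ0.le (by linarith)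
    have h6 : τ = 1 - ρ := by rw [hρ]; ring
    nlinarith
  have hgeom : (1 - ρ * z) * ∑ l ∈ Finset.range D, ((ρ ^ l : ℝ) : ℂ) * z ^ l
      = ((1 - ρ ^ D : ℝ) : ℂ) := by
    have h2 : ∀ l, ((ρ ^ l : ℝ) : ℂ) * z ^ l = (ρ * z) ^ l := fun l => by
      rw [mul_pow]; push_cast; rfl
    simp only [h2]
    rw [mul_neg_geom_sum, mul_pow, hzD]; push_cast; ring
  have hρD : ρ ^ D ≤ 1 / 2 := by
    have h2 : ρ ≤ Real.exp (-τ) := by linarith [Real.add_one_le_exp (-τ)]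
    have h3 : ρ ^ D ≤ Real.exp (-1) := by
      refine (pow_le_pow_left₀ hρ0 h2 D).trans ?_
      rw [← Real.exp_nat_mul]
      exact Real.exp_le_exp.mpr (by linarith)
    have h4 : Real.exp (-1) ≤ 1 / 2 := by
      rw [Real.exp_neg, ← one_div]
      exact one_div_le_one_div_of_le two_pos (by linarith [Real.add_one_le_exp 1])
    linarith
  have hnorm := congrArg (fun w : ℂ => ‖w‖ ^ 2) hgeom
  simp only [norm_mul, mul_pow, Complex.norm_real, Real.norm_eq_abs, sq_abs] at hnorm
  set S := ‖∑ l ∈ Finset.range D, ((ρ ^ l : ℝ) : ℂ) * z ^ l‖ ^ 2 with hS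
  have hS0 : 0 ≤ S := by positivity
  have h5 : 1 / 4 ≤ (τ ^ 2 + ‖z - 1‖ ^ 2) * S := by
    refine le_trans ?_ (mul_le_mul_of_nonneg_right h1 hS0)
    rw [hnorm]; nlinarith
  rw [div_le_iff₀ (by positivity)]
  have h6 : 4 * τ ^ 2 * S * (1 + 1 / τ ^ 2 * ‖z - 1‖ ^ 2) = 4 * ((τ ^ 2 + ‖z - 1‖ ^ 2) * S) := by
    field_simp
  rw [h6]; linarith

lemma addOrderOf_mul_valMinAbs_ge {ξ : ZMod n} (hξ : ξ ≠ 0) :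
    (n : ℝ) ≤ addOrderOf ξ * |(ξ.valMinAbs : ℝ)| := by
  have h1 : ((addOrderOf ξ * ξ.valMinAbs : ℤ) : ZMod n) = 0 := by
    push_cast
    rw [← nsmul_eq_mul, addOrderOf_nsmul_eq_zero]
  rw [ZMod.intCast_zmod_eq_zero_iff_dvd] at h1
  have hpos : 0 < addOrderOf ξ := addOrderOf_pos ξ
  have h2 : (addOrderOf ξ * ξ.valMinAbs : ℤ) ≠ 0 := by
    refine mul_ne_zero (by exact_mod_cast hpos.ne') ?_
    rwa [Ne, ZMod.valMinAbs_eq_zero]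
  have h3 := Int.le_of_dvd (abs_pos.mpr h2) ((dvd_abs _ _).mpr h1)
  rw [abs_mul, Nat.abs_cast] at h3
  exact_mod_cast h3

/-- Averaged over a uniform jump length, a mode of order at least `√m` is damped by `4 / √m`. -/
lemma sum_damp_le {r : ℝ} (hr : 1 ≤ r) {ξ : ZMod n} (hD : r ≤ addOrderOf ξ) :
    ∑ d, damp (r ^ 2) ξ d ≤ 4 * n / r := by
  have hr0 : 0 < r := by linarith
  set D := addOrderOf ξ with hDdef
  set τ := 1 / r with hτ
  have hτ0 : 0 < τ := by positivity
  have hτ1 : τ ≤ 1 := by rw [hτ, div_le_one hr0]; exact hr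
  have hterm : ∀ d : ZMod n, damp (r ^ 2) ξ d ≤
      4 * τ ^ 2 * ‖∑ l ∈ Finset.range D,
        (((1 - τ) ^ l : ℝ) : ℂ) * ZMod.stdAddChar (d * ((l : ZMod n) * ξ))‖ ^ 2 := by
    intro d
    have hpow : ∀ l : ℕ, (ZMod.stdAddChar (ξ * d) : ℂ) ^ l
        = ZMod.stdAddChar (d * ((l : ZMod n) * ξ)) := fun l => by
      rw [← AddChar.map_nsmul_eq_pow, nsmul_eq_mul]; congr 1; ring
    have h := lorentz_le hτ0 hτ1 (z := (ZMod.stdAddChar (ξ * d) : ℂ))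
      (AddChar.norm_apply _ _) (D := D)
      (by rw [hτ, one_div, ← div_eq_inv_mul, le_div_iff₀ hr0]; linarith)
      (by rw [hpow, ← nsmul_eq_mul, hDdef, addOrderOf_nsmul_eq_zero]; simp)
    have h2 : 1 / τ ^ 2 = r ^ 2 := by rw [hτ]; field_simp
    simp only [hpow] at h
    rw [h2] at h
    exact h
  refine (Finset.sum_le_sum fun d _ => hterm d).trans ?_
  rw [← Finset.mul_sum, sum_norm_sq_trig]
  · have h1 : τ * ∑ l ∈ Finset.range D, ((1 - τ) ^ l) ^ 2 ≤ 1 := by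
      have h2 : ∑ l ∈ Finset.range D, ((1 - τ) ^ l) ^ 2
          ≤ ∑ l ∈ Finset.range D, (1 - τ) ^ l := by
        refine Finset.sum_le_sum fun l _ => ?_
        have h3 : 0 ≤ (1 - τ) ^ l := pow_nonneg (by linarith) l
        have h4 : (1 - τ) ^ l ≤ 1 := pow_le_one₀ (by linarith) (by linarith)
        nlinarith
      have h5 : τ * ∑ l ∈ Finset.range D, (1 - τ) ^ l = 1 - (1 - τ) ^ D := by
        have := mul_neg_geom_sum (1 - τ) D
        rwa [sub_sub_cancel] at this
      have h6 : 0 ≤ (1 - τ) ^ D := pow_nonneg (by linarith) D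
      have := mul_le_mul_of_nonneg_left h2 hτ0.le
      linarith
    have h7 : 4 * τ ^ 2 * (n * ∑ l ∈ Finset.range D, ((1 - τ) ^ l) ^ 2)
        = 4 * n * τ * (τ * ∑ l ∈ Finset.range D, ((1 - τ) ^ l) ^ 2) := by ring
    rw [h7]
    refine (mul_le_mul_of_nonneg_left h1 (by positivity)).trans_eq ?_
    rw [hτ]; ring
  · intro i hi j hj hij
    have hi' : i ∈ Set.Iio D := by simpa using hi
    have hj' : j ∈ Set.Iio D := by simpa using hj
    refine nsmul_injOn_Iio_addOrderOf hi' hj' ?_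
    simpa only [nsmul_eq_mul] using hij

lemma sum_lorentz_nat {s : ℝ} (hs : 0 < s) (N : ℕ) :
    ∑ j ∈ Finset.range N, 1 / (1 + s ^ 2 * ((j + 1 : ℕ) : ℝ) ^ 2)
      ≤ 2 / s * (1 - 1 / (1 + s * N)) := by
  induction N with
  | zero => simp
  | succ N ih =>
    rw [Finset.sum_range_succ]
    have hN : (0:ℝ) ≤ N := Nat.cast_nonneg N
    have h1 : 1 / (1 + s ^ 2 * ((N + 1 : ℕ) : ℝ) ^ 2)
        ≤ 2 / ((1 + s * N) * (1 + s * ((N + 1 : ℕ) : ℝ))) := by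
      rw [div_le_div_iff₀ (by positivity) (by positivity)]
      push_cast
      nlinarith [sq_nonneg (s * (N + 1) - 1), mul_nonneg hs.le hN]
    have h2 : 2 / ((1 + s * N) * (1 + s * ((N + 1 : ℕ) : ℝ)))
        = 2 / s * (1 / (1 + s * N) - 1 / (1 + s * ((N + 1 : ℕ) : ℝ))) := by
      push_cast
      field_simp; ring
    rw [h2] at h1
    linarith

lemma sum_lorentz_zmod {s : ℝ} (hs : 0 < s) :
    ∑ ξ ∈ Finset.univ.erase (0 : ZMod n), 1 / (1 + s ^ 2 * (ξ.valMinAbs : ℝ) ^ 2) ≤ 4 / s := by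
  set g : ℕ → ℝ := fun j => 1 / (1 + s ^ 2 * (j : ℝ) ^ 2) with hg
  have hg0 : ∀ j, 0 ≤ g j := fun j => by simp only [hg]; positivity
  have h1 : ∀ ξ : ZMod n, 1 / (1 + s ^ 2 * (ξ.valMinAbs : ℝ) ^ 2) = g ξ.valMinAbs.natAbs := by
    intro ξ
    simp only [hg, Nat.cast_natAbs, Int.cast_abs, sq_abs]
  have h2 : ∀ ξ ∈ Finset.univ.erase (0 : ZMod n),
      1 / (1 + s ^ 2 * (ξ.valMinAbs : ℝ) ^ 2) ≤ g ξ.val + g (-ξ).val := by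
    intro ξ hξ
    rw [h1, ZMod.valMinAbs_natAbs_eq_min, ZMod.neg_val, if_neg (Finset.ne_of_mem_erase hξ)]
    rcases min_choice ξ.val (n - ξ.val) with h | h <;> rw [h]
    · linarith [hg0 (n - ξ.val)]
    · linarith [hg0 ξ.val]
  have h3 : ∑ ξ ∈ Finset.univ.erase (0 : ZMod n), g (-ξ).val
      = ∑ ξ ∈ Finset.univ.erase (0 : ZMod n), g ξ.val := by
    refine Finset.sum_nbij' (fun ξ => -ξ) (fun ξ => -ξ) ?_ ?_ ?_ ?_ ?_ <;> simp
  have h4 : ∑ ξ ∈ Finset.univ.erase (0 : ZMod n), g ξ.val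
      ≤ ∑ j ∈ Finset.range n, g (j + 1) := by
    have himg : ∑ ξ ∈ Finset.univ.erase (0 : ZMod n), g ξ.val
        = ∑ j ∈ (Finset.univ.erase (0 : ZMod n)).image (fun ξ => ξ.val - 1), g (j + 1) := by
      rw [Finset.sum_image]
      · refine Finset.sum_congr rfl fun ξ hξ => ?_
        have : ξ.val ≠ 0 := by
          rw [Ne, ZMod.val_eq_zero]; exact Finset.ne_of_mem_erase hξ
        congr 1; omega
      · intro x hx y hy hxy
        have h5 : x.val ≠ 0 := by
          rw [Ne, ZMod.val_eq_zero]; exact Finset.ne_of_mem_erase hx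
        have h6 : y.val ≠ 0 := by
          rw [Ne, ZMod.val_eq_zero]; exact Finset.ne_of_mem_erase hy
        simp only at hxy
        exact ZMod.val_injective n (by omega)
    rw [himg]
    refine Finset.sum_le_sum_of_subset_of_nonneg ?_ fun j _ _ => hg0 _
    intro j hj
    obtain ⟨ξ, -, rfl⟩ := Finset.mem_image.mp hj
    have := ZMod.val_lt ξ
    rw [Finset.mem_range]; omega
  have h5 := sum_lorentz_nat hs n
  have h6 : 2 / s * (1 - 1 / (1 + s * n)) ≤ 2 / s := by
    refine mul_le_of_le_one_right (by positivity) ?_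
    have : 0 ≤ 1 / (1 + s * n) := by positivity
    linarith
  calc _ ≤ ∑ ξ ∈ Finset.univ.erase (0 : ZMod n), (g ξ.val + g (-ξ).val) :=
        Finset.sum_le_sum h2
    _ = 2 * ∑ ξ ∈ Finset.univ.erase (0 : ZMod n), g ξ.val := by
        rw [Finset.sum_add_distrib, h3]; ring
    _ ≤ 2 * (2 / s) := by
        refine mul_le_mul_of_nonneg_left (h4.trans (h5.trans h6)) zero_le_two
    _ = 4 / s := by ring

lemma sum_prod_damp (m : ℝ) (ξ : ZMod n) (k : ℕ) :
    ∑ σ : Fin k × Bool → ZMod n, ∏ i, damp m ξ (σ (i, true) - σ (i, false))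
      = (n * ∑ d, damp m ξ d) ^ k := by
  have h1 : n * ∑ d, damp m ξ d = ∑ h : Bool → ZMod n, damp m ξ (h true - h false) := by
    rw [← Equiv.sum_comp (Equiv.boolArrowEquivProd (ZMod n)).symm, Fintype.sum_prod_type]
    have : ∀ x : ZMod n, ∑ y, damp m ξ (y - x) = ∑ d, damp m ξ d := fun x =>
      Equiv.sum_comp (Equiv.subRight x) _
    simp [Equiv.boolArrowEquivProd, this]
  rw [h1, Fintype.sum_pow]
  exact Equiv.sum_comp (Equiv.curry (Fin k) Bool (ZMod n))
    (fun τ : Fin k → Bool → ZMod n => ∏ i, damp m ξ (τ i true - τ i false))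

end Averages

/-! ### Uniform configurations as ordered tuples of hubs -/

section Configurations

variable {n : ℕ} [NeZero n] {k : ℕ}

/-- The injective tuple `σ` lists the hubs so that `σ (i, true)` and `σ (i, false)` are the two
ends of the `i`-th matching edge. -/
def Param (σ : Fin k × Bool → ZMod n) (H : Finset (ZMod n)) (μ : ZMod n → ZMod n) : Prop :=
  Function.Injective σ ∧ (∀ x, x ∈ H ↔ ∃ y, σ y = x) ∧ ∀ i b, μ (σ (i, b)) = σ (i, !b)

/-- Configurations are determined by the tuples listing them. -/
lemma Param.unique {σ : Fin k × Bool → ZMod n} {H H' : Finset (ZMod n)}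
    {μ μ' : ZMod n → ZMod n} (hc : IsConfig n k H μ) (hc' : IsConfig n k H' μ')
    (h : Param σ H μ) (h' : Param σ H' μ') : H = H' ∧ μ = μ' := by
  have hH : H = H' := by ext x; rw [h.2.1, h'.2.1]
  refine ⟨hH, funext fun x => ?_⟩
  by_cases hx : x ∈ H
  · obtain ⟨⟨i, b⟩, rfl⟩ := (h.2.1 x).mp hx
    rw [h.2.2, h'.2.2]
  · rw [hc.2.2.2.2 x hx, hc'.2.2.2.2 x (hH ▸ hx)]

lemma exists_config_of_injective {σ : Fin k × Bool → ZMod n} (hσ : Function.Injective σ) :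
    ∃ H μ, IsConfig n k H μ ∧ Param σ H μ := by
  set μ : ZMod n → ZMod n := fun x =>
    if h : ∃ y, σ y = x then σ (h.choose.1, !h.choose.2) else x with hμ
  have hin : ∀ i b, μ (σ (i, b)) = σ (i, !b) := by
    intro i b
    have h : ∃ y, σ y = σ (i, b) := ⟨_, rfl⟩
    have h2 : h.choose = (i, b) := hσ h.choose_spec
    simp only [hμ]
    rw [dif_pos h, h2]
  have hout : ∀ x, (¬ ∃ y, σ y = x) → μ x = x := fun x hx => by simp only [hμ]; rw [dif_neg hx]
  have hmem : ∀ x, x ∈ Finset.univ.image σ ↔ ∃ y, σ y = x := fun x => by simp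
  refine ⟨Finset.univ.image σ, μ, ⟨?_, ?_, ?_, ?_, ?_⟩, hσ, hmem, hin⟩
  · rw [Finset.card_image_of_injective _ hσ]; simp [mul_comm]
  · intro x hx
    obtain ⟨⟨i, b⟩, rfl⟩ := (hmem x).mp hx
    rw [hin, hmem]; exact ⟨_, rfl⟩
  · intro x
    by_cases hx : ∃ y, σ y = x
    · obtain ⟨⟨i, b⟩, rfl⟩ := hx
      rw [hin, hin, Bool.not_not]
    · rw [hout x hx, hout x hx]
  · intro x hx
    obtain ⟨⟨i, b⟩, rfl⟩ := (hmem x).mp hx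
    rw [hin]
    intro h
    have := hσ h
    simp at this
  · intro x hx
    rw [hmem] at hx
    exact hout x hx

/-- Every configuration is listed by some tuple: enumerate the hubs `x` whose representative in
`[0, n)` is smaller than that of their partner. -/
lemma exists_param {H : Finset (ZMod n)} {μ : ZMod n → ZMod n} (hc : IsConfig n k H μ) :
    ∃ σ : Fin k × Bool → ZMod n, Param σ H μ := by
  obtain ⟨hcard, hH, hinv, hfix, -⟩ := hc
  set A := H.filter fun x => x.val < (μ x).val with hA
  set A' := H.filter fun x => ¬ x.val < (μ x).val with hA'
  have hval : ∀ x ∈ H, x.val ≠ (μ x).val := fun x hx h =>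
    hfix x hx (ZMod.val_injective n h).symm
  have hAA' : A'.card = A.card := by
    refine Finset.card_nbij' μ μ ?_ ?_ (fun x _ => hinv x) (fun x _ => hinv x)
    · intro x hx
      simp only [hA', hA, Finset.coe_filter, Set.mem_ofPred_eq] at hx ⊢
      refine ⟨hH x hx.1, ?_⟩
      rw [hinv]; have := hval x hx.1; omega
    · intro x hx
      simp only [hA', hA, Finset.coe_filter, Set.mem_ofPred_eq] at hx ⊢
      refine ⟨hH x hx.1, ?_⟩
      rw [hinv]; omega
  have hAk : A.card = k := by
    have := Finset.card_filter_add_card_filter_not (s := H) fun x => x.val < (μ x).val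
    simp only [← hA, ← hA'] at this
    omega
  have e : Fin k ≃ A := (A.equivFinOfCardEq hAk).symm
  have he : ∀ i, ((e i : ZMod n)) ∈ H ∧ (e i : ZMod n).val < (μ (e i)).val := fun i =>
    Finset.mem_filter.mp (e i).2
  refine ⟨fun y => if y.2 then e y.1 else μ (e y.1), ?_, ?_, ?_⟩
  · rintro ⟨i, b⟩ ⟨j, c⟩ h
    have hi := (he i).2
    have hj := (he j).2
    have key : b = c ∧ (e i : ZMod n) = e j := by
      cases b <;> cases c <;> simp only [if_true, Bool.false_eq_true, if_false] at h
      · exact ⟨rfl, by rw [← hinv (e i), h, hinv]⟩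
      · rw [← h, hinv] at hj; omega
      · rw [h, hinv] at hi; omega
      · exact ⟨rfl, h⟩
    rw [key.1, e.injective (Subtype.ext key.2)]
  · intro x
    constructor
    · intro hx
      by_cases hlt : x.val < (μ x).val
      · refine ⟨(e.symm ⟨x, Finset.mem_filter.mpr ⟨hx, hlt⟩⟩, true), by simp⟩
      · have hμx : μ x ∈ A := Finset.mem_filter.mpr ⟨hH x hx, by
          rw [hinv]; have := hval x hx; omega⟩
        exact ⟨(e.symm ⟨μ x, hμx⟩, false), by simp [hinv]⟩
    · rintro ⟨⟨i, b⟩, rfl⟩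
      cases b
      · simpa using hH _ (he i).1
      · simpa using (he i).1
  · intro i b
    cases b <;> simp [hinv]

/-- A permutation of the vertices carrying one configuration to another carries listings to
listings, injectively. By symmetry all configurations have the same number of listings. -/
lemma card_param_le {H H' : Finset (ZMod n)} {μ μ' : ZMod n → ZMod n}
    (hc : IsConfig n k H μ) (hc' : IsConfig n k H' μ') :
    (Finset.univ.filter fun σ : Fin k × Bool → ZMod n => Param σ H μ).card
      ≤ (Finset.univ.filter fun σ : Fin k × Bool → ZMod n => Param σ H' μ').card := by
  obtain ⟨σ₀, h₀⟩ := exists_param hc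
  obtain ⟨σ₁, h₁⟩ := exists_param hc'
  obtain ⟨g, hg⟩ : ∃ g : Equiv.Perm (ZMod n), ∀ y, g (σ₀ y) = σ₁ y := by
    let e : {x // ∃ y, σ₀ y = x} ≃ {x // ∃ y, σ₁ y = x} :=
      (Equiv.ofInjective σ₀ h₀.1).symm.trans (Equiv.ofInjective σ₁ h₁.1)
    refine ⟨e.extendSubtype, fun y => ?_⟩
    rw [Equiv.extendSubtype_apply_of_mem e _ ⟨y, rfl⟩]
    have : (Equiv.ofInjective σ₀ h₀.1).symm ⟨σ₀ y, ⟨y, rfl⟩⟩ = y := by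
      rw [Equiv.symm_apply_eq]; rfl
    change ((Equiv.ofInjective σ₁ h₁.1)
      ((Equiv.ofInjective σ₀ h₀.1).symm ⟨σ₀ y, ⟨y, rfl⟩⟩) : ZMod n) = σ₁ y
    rw [this]; rfl
  have hmem : ∀ {σ : Fin k × Bool → ZMod n}, Param σ H μ → ∀ y, ∃ y', σ₀ y' = σ y :=
    fun h y => (h₀.2.1 _).mp ((h.2.1 _).mpr ⟨y, rfl⟩)
  refine Finset.card_le_card_of_injOn (fun σ => g ∘ σ) ?_ ?_
  · intro σ hσ
    have hσ : Param σ H μ := by simpa using hσ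
    simp only [Finset.coe_filter, Finset.mem_univ, true_and, Set.mem_ofPred_eq]
    refine ⟨g.injective.comp hσ.1, fun x => ?_, fun i b => ?_⟩
    · rw [h₁.2.1]
      constructor
      · rintro ⟨y, rfl⟩
        obtain ⟨y', hy'⟩ := (hσ.2.1 (σ₀ y)).mp ((h₀.2.1 _).mpr ⟨y, rfl⟩)
        exact ⟨y', by rw [Function.comp_apply, hy', hg]⟩
      · rintro ⟨y, rfl⟩
        obtain ⟨y', hy'⟩ := hmem hσ y
        exact ⟨y', by rw [Function.comp_apply, ← hy', hg]⟩
    · obtain ⟨⟨i', b'⟩, hy'⟩ := hmem hσ (i, b)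
      simp only [Function.comp_apply]
      rw [← hσ.2.2 i b, ← hy', hg, h₁.2.2, h₀.2.2, hg]
  · intro σ _ τ _ h
    funext y
    exact g.injective (congrFun h y)

lemma card_injective_ge (hn : 4 * k ≤ n) :
    ((n : ℝ) / 2) ^ (2 * k) ≤
      (Finset.univ.filter fun σ : Fin k × Bool → ZMod n => Function.Injective σ).card := by
  have h1 : (Finset.univ.filter fun σ : Fin k × Bool → ZMod n => Function.Injective σ).card
      = n.descFactorial (2 * k) := by
    rw [← Fintype.card_subtype]
    have h2 := Fintype.card_congr (Equiv.subtypeInjectiveEquivEmbedding (Fin k × Bool) (ZMod n))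
    rw [h2, Fintype.card_embedding_eq]
    simp [mul_comm]
  rw [h1]
  have h2 : ((n + 1 - 2 * k : ℕ) : ℝ) ^ (2 * k) ≤ n.descFactorial (2 * k) := by
    exact_mod_cast Nat.pow_sub_le_descFactorial n (2 * k)
  refine le_trans ?_ h2
  refine pow_le_pow_left₀ (by positivity) ?_ _
  have h3 : ((n + 1 - 2 * k : ℕ) : ℝ) = n + 1 - 2 * k := by
    rw [Nat.cast_sub (by omega)]; push_cast; ring
  have h4 : (4 * k : ℝ) ≤ n := by exact_mod_cast hn
  rw [h3]; linarith

/-- Markov's inequality over random configurations, with the expectation taken over all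
`2k`-tuples of vertices: at least a fraction `4 ^ (-k)` of them are injective. -/
lemma configProb_ge (hn : 4 * k ≤ n) {F : Finset (ZMod n) → (ZMod n → ZMod n) → ℝ}
    {W : (Fin k × Bool → ZMod n) → ℝ} (hW0 : ∀ σ, 0 ≤ W σ)
    (hFW : ∀ H μ σ, Param σ H μ → F H μ ≤ W σ) {η δ : ℝ} (hη : 0 < η)
    (hW : ∑ σ, W σ ≤ δ * η * ((n : ℝ) / 2) ^ (2 * k))
    {E : Finset (ZMod n) → (ZMod n → ZMod n) → Prop}
    (hE : ∀ H μ, IsConfig n k H μ → F H μ ≤ η → E H μ) :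
    1 - δ ≤ configProb n k E := by
  set S := Finset.univ.filter (fun cfg : Finset (ZMod n) × (ZMod n → ZMod n) =>
      IsConfig n k cfg.1 cfg.2) with hS
  set G := Finset.univ.filter (fun cfg : Finset (ZMod n) × (ZMod n → ZMod n) =>
      IsConfig n k cfg.1 cfg.2 ∧ E cfg.1 cfg.2) with hG
  set Bd := S.filter (fun cfg => ¬ F cfg.1 cfg.2 ≤ η) with hB
  let fib : Finset (ZMod n) × (ZMod n → ZMod n) → Finset (Fin k × Bool → ZMod n) := fun cfg =>
    Finset.univ.filter fun σ => Param σ cfg.1 cfg.2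
  set I := Finset.univ.filter fun σ : Fin k × Bool → ZMod n => Function.Injective σ with hI
  have hIcard := card_injective_ge (n := n) (k := k) hn
  rw [← hI] at hIcard
  have hn0 : (0:ℝ) < n := by exact_mod_cast NeZero.pos n
  have hIpos : (0:ℝ) < I.card := lt_of_lt_of_le (by positivity) hIcard
  obtain ⟨σ₀, hσ₀⟩ : I.Nonempty := Finset.card_pos.mp (by exact_mod_cast hIpos)
  obtain ⟨H₀, μ₀, hc₀, hp₀⟩ := exists_config_of_injective (Finset.mem_filter.mp hσ₀).2
  set M := (fib (H₀, μ₀)).card with hM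
  have hfib : ∀ c ∈ S, (fib c).card = M := fun c hc =>
    le_antisymm (card_param_le (Finset.mem_filter.mp hc).2 hc₀)
      (card_param_le hc₀ (Finset.mem_filter.mp hc).2)
  have hdisj : (S : Set (Finset (ZMod n) × (ZMod n → ZMod n))).PairwiseDisjoint fib := by
    intro c hc c' hc' hne
    refine Finset.disjoint_left.mpr fun σ hσ hσ' => hne ?_
    have h := Param.unique (Finset.mem_filter.mp hc).2 (Finset.mem_filter.mp hc').2
      (Finset.mem_filter.mp hσ).2 (Finset.mem_filter.mp hσ').2
    exact Prod.ext h.1 h.2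
  have hcover : I ⊆ S.biUnion fib := by
    intro σ hσ
    obtain ⟨H, μ, hc, hp⟩ := exists_config_of_injective (Finset.mem_filter.mp hσ).2
    refine Finset.mem_biUnion.mpr ⟨(H, μ), Finset.mem_filter.mpr ⟨Finset.mem_univ _, hc⟩,
      Finset.mem_filter.mpr ⟨Finset.mem_univ _, hp⟩⟩
  have hcount : (I.card : ℝ) ≤ S.card * M := by
    have h1 := (Finset.card_le_card hcover).trans_eq (Finset.card_biUnion hdisj)
    rw [Finset.sum_congr rfl hfib, Finset.sum_const, smul_eq_mul] at h1
    exact_mod_cast h1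
  have hbad : (Bd.card : ℝ) * M * η ≤ ∑ σ, W σ := by
    have h1 : ∑ σ ∈ Bd.biUnion fib, W σ = ∑ c ∈ Bd, ∑ σ ∈ fib c, W σ :=
      Finset.sum_biUnion (hdisj.subset (by exact_mod_cast Finset.filter_subset _ _))
    have h2 : ∑ σ ∈ Bd.biUnion fib, W σ ≤ ∑ σ, W σ :=
      Finset.sum_le_sum_of_subset_of_nonneg (Finset.subset_univ _) fun σ _ _ => hW0 σ
    have h3 : ∀ c ∈ Bd, M * η ≤ ∑ σ ∈ fib c, W σ := by
      intro c hc
      have hc' := Finset.mem_filter.mp hc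
      rw [← hfib c hc'.1, ← nsmul_eq_mul]
      refine Finset.card_nsmul_le_sum _ _ _ fun σ hσ => ?_
      exact (not_le.mp hc'.2).le.trans (hFW _ _ σ (Finset.mem_filter.mp hσ).2)
    have h4 := Finset.card_nsmul_le_sum _ _ _ h3
    rw [nsmul_eq_mul, ← mul_assoc] at h4
    linarith
  have hMpos : (0:ℝ) < M := by
    rcases Nat.eq_zero_or_pos M with h | h
    · rw [h] at hcount; simp only [Nat.cast_zero, mul_zero] at hcount; linarith
    · exact_mod_cast h
  have hSpos : (0:ℝ) < S.card := by
    rcases Nat.eq_zero_or_pos S.card with h | h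
    · rw [h] at hcount; simp only [Nat.cast_zero, zero_mul] at hcount; linarith
    · exact_mod_cast h
  have hδ : 0 ≤ δ := by
    have h1 : 0 ≤ δ * η * ((n : ℝ) / 2) ^ (2 * k) :=
      (Finset.sum_nonneg fun σ _ => hW0 σ).trans hW
    have h2 := nonneg_of_mul_nonneg_left h1 (by positivity)
    exact nonneg_of_mul_nonneg_left h2 hη
  have hBle : (Bd.card : ℝ) ≤ δ * S.card := by
    have h1 : (Bd.card : ℝ) * M * η ≤ δ * η * (S.card * M) :=
      hbad.trans (hW.trans (mul_le_mul_of_nonneg_left (hIcard.trans hcount) (by positivity)))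
    have h2 : (Bd.card : ℝ) * (M * η) ≤ δ * S.card * (M * η) := by linarith
    exact le_of_mul_le_mul_right h2 (by positivity)
  have hsplit : (S.card : ℝ) ≤ G.card + Bd.card := by
    have h1 : S ⊆ G ∪ Bd := by
      intro c hc
      by_cases h : F c.1 c.2 ≤ η
      · have hc' := (Finset.mem_filter.mp hc).2
        exact Finset.mem_union_left _
          (Finset.mem_filter.mpr ⟨Finset.mem_univ _, hc', hE _ _ hc' h⟩)
      · exact Finset.mem_union_right _ (Finset.mem_filter.mpr ⟨hc, h⟩)
    exact_mod_cast (Finset.card_le_card h1).trans (Finset.card_union_le _ _)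
  change 1 - δ ≤ (G.card : ℝ) / S.card
  rw [le_div_iff₀ hSpos]
  linarith

end Configurations

/-! ### The expected resolvent sum -/

section Expectation

variable {n : ℕ} [NeZero n] {k : ℕ}

/-- Nonzero frequencies with representative of absolute value at most `√n`. -/
def lowFreq (n : ℕ) [NeZero n] : Finset (ZMod n) :=
  (Finset.univ.erase (0 : ZMod n)).filter fun ξ => (ξ.valMinAbs : ℝ) ^ 2 ≤ n

/-- Upper bound for the resolvent sum at scale `m = r²` in terms of an ordered listing `σ` of the
hubs. At low frequencies one factor uses the free dissipation and the `k` others one matching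
edge each; at high frequencies free dissipation alone suffices. -/
def majorant (k : ℕ) (c r : ℝ) (σ : Fin k × Bool → ZMod n) : ℝ :=
  ∑ ξ ∈ lowFreq n, 1 / (1 + (r * Real.sqrt (c / n)) ^ 2 * (ξ.valMinAbs : ℝ) ^ 2)
      * ∏ i, damp (r ^ 2) ξ (σ (i, true) - σ (i, false))
    + n / (c * r ^ 2) ^ (k + 1)

lemma majorant_nonneg {c r : ℝ} (hc : 0 ≤ c) (σ : Fin k × Bool → ZMod n) :
    0 ≤ majorant k c r σ := by
  refine add_nonneg (Finset.sum_nonneg fun ξ _ => mul_nonneg (by positivity) ?_) (by positivity)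
  exact Finset.prod_nonneg fun i _ => damp_nonneg (sq_nonneg r) _ _

lemma zsum_le_majorant {p q : ℝ} (hp : 0 < p) (hq : 0 < q) (hpq : p + q < 1)
    {c₁ c r : ℝ} (hc₁ : c₁ = 16 * ((p + q) * (1 - p - q))) (hc : c = c₁ / (1 + c₁))
    (hr : 1 ≤ r) {K : ℕ} (hK : 1 ≤ K) {H : Finset (ZMod n)} {μ : ZMod n → ZMod n}
    {σ : Fin k × Bool → ZMod n} (hσ : Param σ H μ) :
    zsum k (r ^ 2) p q K H μ ≤ majorant k c r σ := by
  have hn : (0:ℝ) < n := by exact_mod_cast NeZero.pos n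
  have hr' : 0 < 1 - p - q := by linarith
  have hc₁0 : 0 < c₁ := by rw [hc₁]; positivity
  have hc0 : 0 < c := by rw [hc]; positivity
  have hr0 : 0 < r := by linarith
  have hrate0 := rate_nonneg hp.le hq.le hpq.le K H μ
  have hfree : ∀ ξ : ZMod n, 1 - (‖freeEig p q ξ‖ ^ 2) ^ (K * n) ≤ rate p q K H μ ξ := fun ξ =>
    le_add_of_nonneg_right (Finset.sum_nonneg fun _ _ => by positivity)
  have hx : ∀ ξ : ZMod n, c₁ * (ξ.valMinAbs : ℝ) ^ 2 / n
      / (1 + c₁ * (ξ.valMinAbs : ℝ) ^ 2 / n) ≤ rate p q K H μ ξ := fun ξ =>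
    (free_rate_ge hp.le hq.le hpq.le hK ξ _ (by rw [hc₁])).trans (hfree ξ)
  have hjump : ∀ (ξ : ZMod n) (i : Fin k),
      ‖(ZMod.stdAddChar (ξ * (σ (i, true) - σ (i, false))) : ℂ) - 1‖ ^ 2
        ≤ rate p q K H μ ξ := by
    intro ξ i
    have h1 : σ (i, false) ∈ H := (hσ.2.1 _).mpr ⟨_, rfl⟩
    have h2 := Finset.single_le_sum
      (f := fun z => ‖(ZMod.stdAddChar (ξ * (μ z - z)) : ℂ) - 1‖ ^ 2)
      (fun z _ => by positivity) h1
    simp only [hσ.2.2 i false, Bool.not_false] at h2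
    have h3 : (‖freeEig p q ξ‖ ^ 2) ^ (K * n) ≤ 1 :=
      pow_le_one₀ (by positivity)
        (pow_le_one₀ (norm_nonneg _) (norm_freeEig_le_one hp.le hq.le hpq.le ξ))
    unfold rate
    linarith
  have hcpos : 0 < 1 + c₁ := by linarith
  unfold zsum majorant
  rw [← Finset.sum_filter_add_sum_filter_not (Finset.univ.erase (0 : ZMod n))
    (fun ξ : ZMod n => (ξ.valMinAbs : ℝ) ^ 2 ≤ n)]
  refine add_le_add (Finset.sum_le_sum fun ξ hξ => ?_) ?_
  · have hv : (ξ.valMinAbs : ℝ) ^ 2 ≤ n := (Finset.mem_filter.mp hξ).2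
    have hκ := hrate0 ξ
    set κ := rate p q K H μ ξ with hκdef
    set x := c₁ * (ξ.valMinAbs : ℝ) ^ 2 / n with hxdef
    have hx0 : 0 ≤ x := by positivity
    have hx1 : x ≤ c₁ := by
      rw [hxdef, div_le_iff₀ hn]; exact mul_le_mul_of_nonneg_left hv hc₁0.le
    have h1 : (r * Real.sqrt (c / n)) ^ 2 * (ξ.valMinAbs : ℝ) ^ 2 ≤ r ^ 2 * κ := by
      rw [mul_pow, Real.sq_sqrt (by positivity), mul_assoc]
      refine mul_le_mul_of_nonneg_left ?_ (by positivity)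
      refine le_trans ?_ (hx ξ)
      have h2 : c / n * (ξ.valMinAbs : ℝ) ^ 2 = x / (1 + c₁) := by
        rw [hc, hxdef]; field_simp
      rw [h2]
      exact div_le_div_of_nonneg_left hx0 (by linarith) (by linarith)
    have hpos : 0 < 1 + r ^ 2 * κ := by positivity
    rw [pow_succ', ← one_div_mul_one_div]
    refine mul_le_mul ?_ ?_ (by positivity) (by positivity)
    · exact one_div_le_one_div_of_le (by positivity) (by linarith)
    · have h3 : 1 / (1 + r ^ 2 * κ) ^ k = ∏ _i : Fin k, 1 / (1 + r ^ 2 * κ) := by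
        rw [Finset.prod_const, Finset.card_univ, Fintype.card_fin, one_div_pow]
      rw [h3]
      refine Finset.prod_le_prod (fun _ _ => by positivity) fun i _ => ?_
      unfold damp
      refine one_div_le_one_div_of_le (by positivity) ?_
      have := mul_le_mul_of_nonneg_left (hjump ξ i) (by positivity : 0 ≤ r ^ 2)
      linarith
  · have hterm : ∀ ξ ∈ (Finset.univ.erase (0 : ZMod n)).filter
        (fun ξ : ZMod n => ¬ (ξ.valMinAbs : ℝ) ^ 2 ≤ n),
        1 / (1 + r ^ 2 * rate p q K H μ ξ) ^ (k + 1) ≤ 1 / (c * r ^ 2) ^ (k + 1) := by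
      intro ξ hξ
      have hv : (n : ℝ) < (ξ.valMinAbs : ℝ) ^ 2 := not_le.mp (Finset.mem_filter.mp hξ).2
      have h1 : c ≤ rate p q K H μ ξ := by
        refine le_trans ?_ (hx ξ)
        have hx1 : c₁ ≤ c₁ * (ξ.valMinAbs : ℝ) ^ 2 / n := by
          rw [le_div_iff₀ hn]; exact mul_le_mul_of_nonneg_left hv.le hc₁0.le
        rw [hc, div_le_div_iff₀ hcpos (by linarith)]
        linarith
      refine one_div_le_one_div_of_le (by positivity) (pow_le_pow_left₀ (by positivity) ?_ _)
      have := mul_le_mul_of_nonneg_left h1 (by positivity : 0 ≤ r ^ 2)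
      linarith
    refine (Finset.sum_le_card_nsmul _ _ _ hterm).trans ?_
    rw [nsmul_eq_mul, mul_one_div]
    refine div_le_div_of_nonneg_right ?_ (by positivity)
    have h2 := Finset.card_le_univ ((Finset.univ.erase (0 : ZMod n)).filter
        (fun ξ : ZMod n => ¬ (ξ.valMinAbs : ℝ) ^ 2 ≤ n))
    rw [ZMod.card] at h2
    exact_mod_cast h2

lemma sum_majorant_le {c r L : ℝ} (hc : 0 < c) (hr : 1 ≤ r) (hrn : r ^ 2 ≤ n) (hL : 1 ≤ L)
    (hrL : r ^ (k + 1) = L * Real.sqrt n) :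
    ∑ σ : Fin k × Bool → ZMod n, majorant k c r σ
      ≤ (n : ℝ) ^ (2 * k) * ((4 ^ (k + 1) / Real.sqrt c + 1 / c ^ (k + 1)) / L) := by
  have hn : (0:ℝ) < n := by exact_mod_cast NeZero.pos n
  have hr0 : 0 < r := by linarith
  have hL0 : 0 < L := by linarith
  have hsn : 0 < Real.sqrt n := Real.sqrt_pos.mpr hn
  have hsc : 0 < Real.sqrt c := Real.sqrt_pos.mpr hc
  have hs : 0 < r * Real.sqrt (c / n) := mul_pos hr0 (Real.sqrt_pos.mpr (by positivity))
  have hcard : (Fintype.card (Fin k × Bool → ZMod n) : ℝ) = (n : ℝ) ^ (2 * k) := by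
    rw [Fintype.card_fun, ZMod.card]; push_cast; congr 1; simp [mul_comm]
  unfold majorant
  rw [Finset.sum_add_distrib, Finset.sum_comm, Finset.sum_const, Finset.card_univ, nsmul_eq_mul,
    hcard]
  simp only [← Finset.mul_sum, sum_prod_damp]
  have hlow : ∑ ξ ∈ lowFreq n,
        1 / (1 + (r * Real.sqrt (c / n)) ^ 2 * (ξ.valMinAbs : ℝ) ^ 2)
          * (n * ∑ d, damp (r ^ 2) ξ d) ^ k
      ≤ 4 / (r * Real.sqrt (c / n)) * (n * (4 * n / r)) ^ k := by
    have h1 : ∀ ξ ∈ lowFreq n, 1 / (1 + (r * Real.sqrt (c / n)) ^ 2 * (ξ.valMinAbs : ℝ) ^ 2)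
          * (n * ∑ d, damp (r ^ 2) ξ d) ^ k
        ≤ 1 / (1 + (r * Real.sqrt (c / n)) ^ 2 * (ξ.valMinAbs : ℝ) ^ 2)
          * (n * (4 * n / r)) ^ k := by
      intro ξ hξ
      obtain ⟨hξ0, hv⟩ := Finset.mem_filter.mp hξ
      have hD : r ≤ addOrderOf ξ := by
        -- `n ≤ D |ξ| ≤ D √n`, so the order `D` is at least `√n ≥ r`
        have h2 := addOrderOf_mul_valMinAbs_ge (Finset.ne_of_mem_erase hξ0)
        have h3 : |(ξ.valMinAbs : ℝ)| ≤ Real.sqrt n := Real.abs_le_sqrt hv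
        have h4 : Real.sqrt n * Real.sqrt n ≤ addOrderOf ξ * Real.sqrt n := by
          rw [Real.mul_self_sqrt hn.le]
          exact h2.trans (mul_le_mul_of_nonneg_left h3 (Nat.cast_nonneg _))
        exact (Real.le_sqrt_of_sq_le hrn).trans (le_of_mul_le_mul_right h4 hsn)
      refine mul_le_mul_of_nonneg_left ?_ (by positivity)
      refine pow_le_pow_left₀ (mul_nonneg hn.le (Finset.sum_nonneg fun d _ =>
        damp_nonneg (sq_nonneg r) _ _)) ?_ k
      exact mul_le_mul_of_nonneg_left (sum_damp_le hr hD) hn.le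
    refine (Finset.sum_le_sum h1).trans ?_
    rw [← Finset.sum_mul]
    refine mul_le_mul_of_nonneg_right ?_ (by positivity)
    refine le_trans ?_ (sum_lorentz_zmod (n := n) hs)
    exact Finset.sum_le_sum_of_subset_of_nonneg (Finset.filter_subset _ _)
      fun ξ _ _ => by positivity
  have h1 : 4 / (r * Real.sqrt (c / n)) * (n * (4 * n / r)) ^ k
      = (n : ℝ) ^ (2 * k) * (4 ^ (k + 1) / Real.sqrt c / L) := by
    have h2 : 4 / (r * Real.sqrt (c / n)) * (n * (4 * n / r)) ^ k
        = 4 ^ (k + 1) * (n : ℝ) ^ (2 * k) * Real.sqrt n / (Real.sqrt c * r ^ (k + 1)) := by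
      rw [Real.sqrt_div hc.le, mul_pow, div_pow, mul_pow, pow_succ r, pow_succ 4, pow_mul' _ 2,
        pow_two]
      field_simp
    rw [h2, hrL]; field_simp
  have h3 : (n : ℝ) / (c * r ^ 2) ^ (k + 1) ≤ 1 / c ^ (k + 1) / L := by
    have h4 : (c * r ^ 2) ^ (k + 1) = c ^ (k + 1) * (L ^ 2 * n) := by
      rw [mul_pow, ← pow_mul, mul_comm 2, pow_mul, hrL, mul_pow, Real.sq_sqrt hn.le]
    rw [h4, div_div, div_le_div_iff₀ (by positivity) (by positivity)]
    have h5 : (n : ℝ) * (c ^ (k + 1) * L) ≤ n * (c ^ (k + 1) * L) * L :=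
      le_mul_of_one_le_right (by positivity) hL
    linarith
  have h6 := mul_le_mul_of_nonneg_left h3 (by positivity : 0 ≤ (n : ℝ) ^ (2 * k))
  rw [add_div, mul_add]
  linarith

end Expectation

/-! ### Conclusion -/

/-- Length of the time horizon: with `m ≤ D n^{1/(k+1)}`, the `J + j` blocks of length `K n` fit
into a constant times `n^{(k+2)/(k+1)} ℓ`, where `ℓ = log (1/ε)` is bounded below. -/
lemma time_bound {k n K J j : ℕ} {m C D ℓ : ℝ} (hn : 1 ≤ n) (hC : 0 < C) (hm : 1 ≤ m)
    (hmD : m ≤ D * (n : ℝ) ^ ((1 : ℝ) / (k + 1))) (hℓ : 1 / 2 ≤ ℓ)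
    (hJ : (J : ℝ) ≤ 2 * m * C * (k + 1 : ℕ) + 1) (hj : (j : ℝ) ≤ 2 * (m * C) * ℓ + 1) :
    ((K * n * (J + j) : ℕ) : ℝ)
      ≤ K * (4 * C * (k + 1) + 2 * C + 4) * D
        * (n : ℝ) ^ (((k : ℝ) + 2) / ((k : ℝ) + 1)) * ℓ := by
  have hn0 : (0:ℝ) < n := by exact_mod_cast hn
  have hk : (0:ℝ) ≤ k := Nat.cast_nonneg k
  have h1 : (J : ℝ) + j ≤ (4 * C * (k + 1) + 2 * C + 4) * (m * ℓ) := by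
    push_cast at hJ
    have h2 : 1 ≤ 2 * (m * ℓ) := by nlinarith
    have h3 : m * (C * (k + 1)) ≤ 2 * ℓ * (m * (C * (k + 1))) :=
      le_mul_of_one_le_left (by positivity) (by linarith)
    nlinarith
  have h4 : (n : ℝ) * (n : ℝ) ^ ((1 : ℝ) / (k + 1))
      = (n : ℝ) ^ (((k : ℝ) + 2) / ((k : ℝ) + 1)) := by
    rw [show ((k : ℝ) + 2) / ((k : ℝ) + 1) = 1 + 1 / (k + 1) by field_simp; ring,
      Real.rpow_add hn0, Real.rpow_one]
  rw [← h4]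
  push_cast
  calc (K : ℝ) * n * (J + j) ≤ K * n * ((4 * C * (k + 1) + 2 * C + 4) * (m * ℓ)) :=
        mul_le_mul_of_nonneg_left h1 (by positivity)
    _ ≤ K * n * ((4 * C * (k + 1) + 2 * C + 4) * (D * (n : ℝ) ^ ((1 : ℝ) / (k + 1)) * ℓ)) := by
        refine mul_le_mul_of_nonneg_left ?_ (by positivity)
        refine mul_le_mul_of_nonneg_left ?_ (by positivity)
        exact mul_le_mul_of_nonneg_right hmD (by linarith)
    _ = _ := by ring

/-- The scale `r` with `r ^ (k+1) = L √n`. -/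
lemma exists_scale {k n : ℕ} (hk : 1 ≤ k) (hn : 1 ≤ n) {L : ℝ} (hL : 1 ≤ L) (hLn : L ^ 2 ≤ n) :
    ∃ r : ℝ, 1 ≤ r ∧ r ^ 2 ≤ n ∧ r ^ (k + 1) = L * Real.sqrt n ∧
      r ^ 2 ≤ L ^ 2 * (n : ℝ) ^ ((1 : ℝ) / (k + 1)) := by
  have hn1 : (1:ℝ) ≤ n := by exact_mod_cast hn
  have hk0 : (k + 1 : ℕ) ≠ 0 := Nat.succ_ne_zero k
  have hLs : 1 ≤ L * Real.sqrt n := by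
    have : 1 ≤ Real.sqrt n := Real.one_le_sqrt.mpr hn1
    nlinarith
  set r := (L * Real.sqrt n) ^ (((k + 1 : ℕ) : ℝ)⁻¹) with hr
  have hr1 : 1 ≤ r := Real.one_le_rpow hLs (by positivity)
  have hpow : r ^ (k + 1) = L * Real.sqrt n :=
    Real.rpow_inv_natCast_pow (by linarith) hk0
  have hpow2 : (r ^ 2) ^ (k + 1) = L ^ 2 * n := by
    rw [← pow_mul, mul_comm, pow_mul, hpow, mul_pow, Real.sq_sqrt (by linarith)]
  refine ⟨r, hr1, ?_, hpow, ?_⟩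
  · refine le_of_pow_le_pow_left₀ hk0 (by linarith) ?_
    rw [hpow2]
    calc L ^ 2 * n ≤ (n : ℝ) * n := mul_le_mul_of_nonneg_right hLn (by linarith)
      _ = (n : ℝ) ^ 2 := (sq _).symm
      _ ≤ (n : ℝ) ^ (k + 1) := pow_le_pow_right₀ hn1 (by omega)
  · refine le_of_pow_le_pow_left₀ hk0 (by positivity) ?_
    have h1 : ((n : ℝ) ^ ((1 : ℝ) / (k + 1))) ^ (k + 1) = n := by
      rw [one_div, ← Nat.cast_add_one]
      exact Real.rpow_inv_natCast_pow (by linarith) hk0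
    rw [hpow2, mul_pow, h1, ← pow_mul]
    refine mul_le_mul_of_nonneg_right ?_ (by linarith)
    exact pow_le_pow_right₀ hL (by omega)

/-- for every `δ > 0` there are `γ = γ(δ) < ∞` and `N` such that for all
`n ≥ N` and all `0 < ε < 1/2`, with probability at least `1 - δ` over the random hubs
and matching, `t_mix(ε) ≤ γ · n^{(k+2)/(k+1)} · log(1/ε)`. -/
theorem mixing_time_upper_bound (k : ℕ) (hk : 1 ≤ k) (p q a : ℝ)
    (hp : 0 < p) (hq : 0 < q) (ha : 0 < a) (hpqa : p + q + a ≤ 1) (hpq : q < p)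
    (δ : ℝ) (hδ : 0 < δ) :
    ∃ (γ : ℝ) (N : ℕ), ∀ (n : ℕ) [NeZero n], N ≤ n →
      ∀ ε : ℝ, 0 < ε → ε < 1 / 2 →
        1 - δ ≤ configProb n k (fun H μ =>
          ∃ t : ℕ, (t : ℝ) ≤ γ * (n : ℝ) ^ (((k : ℝ) + 2) / ((k : ℝ) + 1)) * Real.log (1 / ε) ∧
            mixedBy n (cycleP n p q a H μ) ε t) := by
  obtain ⟨C, hC, K, hK, henergy⟩ := energy_ineq (k := k) hp hq ha hpqa hpq
  have hpq1 : p + q < 1 := by linarith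
  have hr' : 0 < 1 - p - q := by linarith
  set c₁ := 16 * ((p + q) * (1 - p - q)) with hc₁
  set c := c₁ / (1 + c₁) with hc
  have hc₁0 : 0 < c₁ := by rw [hc₁]; positivity
  have hc0 : 0 < c := by rw [hc]; positivity
  set η : ℝ := 1 / (8 * 2 ^ (k + 1)) with hη
  have hη0 : 0 < η := by rw [hη]; positivity
  set Q : ℝ := 4 ^ (k + 1) / Real.sqrt c + 1 / c ^ (k + 1) with hQ
  have hQ0 : 0 ≤ Q := by rw [hQ]; positivity
  -- `L` is chosen so that Markov's inequality gives failure probability at most `δ`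
  set L : ℝ := max 1 (Q * 4 ^ k / (δ * η)) with hL
  have hL1 : 1 ≤ L := le_max_left _ _
  have hLQ : Q / L ≤ δ * η / 4 ^ k := by
    have h1 : Q * 4 ^ k / (δ * η) ≤ L := le_max_right _ _
    rw [div_le_iff₀ (by positivity)] at h1
    rw [div_le_div_iff₀ (by linarith) (by positivity)]
    linarith
  refine ⟨K * (4 * C * (k + 1) + 2 * C + 4) * L ^ 2, max (4 * k) ⌈L ^ 2⌉₊, ?_⟩
  intro n _ hN ε hε hε2
  have hn4 : 4 * k ≤ n := (le_max_left _ _).trans hN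
  have hn1 : 1 ≤ n := by omega
  have hLn : L ^ 2 ≤ n :=
    (Nat.le_ceil _).trans (by exact_mod_cast (le_max_right _ _).trans hN)
  obtain ⟨r, hr1, hrn, hrL, hrD⟩ := exists_scale hk hn1 hL1 hLn
  refine configProb_ge hn4 (majorant_nonneg (r := r) hc0.le)
    (fun H μ σ hσ => zsum_le_majorant hp hq hpq1 hc₁ hc hr1 hK hσ) hη0 ?_ ?_
  · refine (sum_majorant_le hc0 hr1 hrn hL1 hrL).trans ?_
    refine (mul_le_mul_of_nonneg_left hLQ (by positivity)).trans_eq ?_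
    rw [div_pow, pow_mul 2, show (2:ℝ) ^ 2 = 4 by norm_num]
    ring
  · intro H μ hcfg hZ
    have hm : 0 < r ^ 2 := by positivity
    have hℓ : 1 / 2 ≤ Real.log (1 / ε) := by
      have h1 : Real.log 2 ≤ Real.log (1 / ε) := by
        refine Real.log_le_log two_pos ?_
        rw [le_div_iff₀ hε]; linarith
      linarith [Real.log_two_gt_d9]
    refine ⟨_, ?_, mixedBy_of_zsum hp hq ha hpqa hC hcfg (henergy n (by omega) H μ hcfg) hm hZ hε
      (Nat.le_ceil _) (Nat.le_ceil _)⟩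
    refine time_bound hn1 hC (one_le_pow₀ hr1) hrD hℓ ?_ ?_
    · exact (Nat.ceil_lt_add_one (by positivity)).le
    · exact (Nat.ceil_lt_add_one (mul_nonneg (by positivity) (by linarith))).le
end
end

section
/- For every real p with 0 < p < 1 and every C > 0 there exist c > 0 and N ∈ ℕ such that for all u ≥ N and all natural numbers r ≤ u with |r − p·u| ≤ C·√u, the binomial probability satisfies (u choose r) · p^r · (1−p)^{u−r} ≥ c / √u. -/
/-!
The lower bound comes from non-asymptotic Stirling estimates. Write `s = u - r`, `q = 1 - p`.
The upper Stirling bound `n! ≤ e √(n+1) (n/e)^n` together with `x ≤ exp (x - 1)` at `x = n/a` gives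
`n! exp (n - n²/a) ≤ e √(n+1) (a/e)^n` for every `a > 0` (`factorial_mul_exp_le`). It is applied
with `(n, a) = (r, pu)` and `(n, a) = (s, qu)`. The two exponents add up to exactly
`-(r - pu)²/(pqu) ≥ -C²/(pq)`, and the product of the right-hand sides is
`e² √((r+1)(s+1)) (u/e)^u p^r q^s`, with `√((r+1)(s+1)) ≤ 2u`. The lower Stirling bound
`√u (u/e)^u ≤ u!` then yields the claim with `c = exp (-C²/(pq)) / (2e²)`, for all `u ≥ 1`.
-/

noncomputable section

/-- Upper Stirling bound; the shift in `√(n + 1)` makes it hold at `n = 0` too. -/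
lemma factorial_le_stirling (n : ℕ) :
    (n.factorial : ℝ) ≤ Real.exp 1 * √((n : ℝ) + 1) * (n / Real.exp 1) ^ n := by
  rcases n with _ | m
  · simp
  · -- `stirlingSeq` decreases from its value `e / √2` at `1`.
    have h : Stirling.stirlingSeq (m + 1) ≤ Stirling.stirlingSeq 1 :=
      Stirling.stirlingSeq'_antitone (Nat.zero_le m)
    rw [Stirling.stirlingSeq_one, Stirling.stirlingSeq, div_le_iff₀ (by positivity)] at h
    refine h.trans ?_
    rw [Real.sqrt_mul (by norm_num), ← mul_assoc, ← mul_assoc,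
      div_mul_cancel₀ _ (by positivity)]
    gcongr
    linarith

/-- Stirling's upper bound with base point `a` in place of `n`: the price is the factor
`exp (n - n²/a)`. -/
lemma factorial_mul_exp_le (n : ℕ) {a : ℝ} (ha : 0 < a) :
    (n.factorial : ℝ) * Real.exp (n - n ^ 2 / a) ≤
      Real.exp 1 * √((n : ℝ) + 1) * (a / Real.exp 1) ^ n := by
  have hbase : (n : ℝ) * Real.exp (1 - n / a) ≤ a := by
    have h1 : (n : ℝ) / a ≤ Real.exp (n / a - 1) := by
      linarith [Real.add_one_le_exp ((n : ℝ) / a - 1)]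
    have h2 : Real.exp (n / a - 1) * Real.exp (1 - n / a) = 1 := by
      rw [← Real.exp_add]; simp
    calc (n : ℝ) * Real.exp (1 - n / a) = a * (n / a * Real.exp (1 - n / a)) := by
          field_simp
      _ ≤ a * (Real.exp (n / a - 1) * Real.exp (1 - n / a)) := by gcongr
      _ = a := by rw [h2, mul_one]
  have hexp : Real.exp (n - n ^ 2 / a) = Real.exp (1 - n / a) ^ n := by
    rw [← Real.exp_nat_mul]; congr 1; ring
  calc (n.factorial : ℝ) * Real.exp (n - n ^ 2 / a)
      ≤ (Real.exp 1 * √((n : ℝ) + 1) * (n / Real.exp 1) ^ n) * Real.exp (1 - n / a) ^ n := by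
        rw [hexp]; gcongr; exact factorial_le_stirling n
    _ = Real.exp 1 * √((n : ℝ) + 1) * (n * Real.exp (1 - n / a) / Real.exp 1) ^ n := by
        rw [mul_assoc, ← mul_pow]; congr 2; ring
    _ ≤ _ := by gcongr

/-- a crude local-CLT lower bound for binomial point probabilities:
for `0 < p < 1` and `C > 0` there are `c > 0` and `N` such that for all `u ≥ N` and
`r ≤ u` with `|r - pu| ≤ C√u`, we have `C(u,r) p^r (1-p)^{u-r} ≥ c/√u`. -/
theorem binomial_point_lower_bound (p : ℝ) (hp0 : 0 < p) (hp1 : p < 1)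
    (C : ℝ) (hC : 0 < C) :
    ∃ c : ℝ, 0 < c ∧ ∃ N : ℕ, ∀ u : ℕ, N ≤ u → ∀ r : ℕ, r ≤ u →
      |(r : ℝ) - p * u| ≤ C * Real.sqrt u →
      c / Real.sqrt u ≤ (Nat.choose u r : ℝ) * p ^ r * (1 - p) ^ (u - r) := by
  have hq : 0 < 1 - p := by linarith
  refine ⟨Real.exp (-(C ^ 2 / (p * (1 - p)))) / (2 * Real.exp 1 ^ 2), by positivity, 1, ?_⟩
  intro u hu r hr hdev
  obtain ⟨s, rfl⟩ := Nat.exists_eq_add_of_le hr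
  rw [Nat.add_sub_cancel_left]
  have hU : (1 : ℝ) ≤ ((r + s : ℕ) : ℝ) := by exact_mod_cast hu
  have hUrs : ((r + s : ℕ) : ℝ) = r + s := by push_cast; rfl
  have hchoose : (Nat.choose (r + s) r : ℝ) * (r.factorial * s.factorial) =
      (r + s).factorial := by
    have := Nat.choose_mul_factorial_mul_factorial (Nat.le_add_right r s)
    rw [Nat.add_sub_cancel_left] at this
    rw [← mul_assoc]; exact_mod_cast this
  have hstir : √((r + s : ℕ) : ℝ) * (((r + s : ℕ) : ℝ) / Real.exp 1) ^ (r + s) ≤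
      (r + s).factorial := by
    refine le_trans ?_ (Stirling.le_factorial_stirling (r + s))
    gcongr
    nlinarith [Real.pi_gt_three]
  generalize ((r + s : ℕ) : ℝ) = U at *
  have hU0 : 0 < U := by linarith
  have hA := factorial_mul_exp_le r (a := p * U) (by positivity)
  have hB := factorial_mul_exp_le s (a := (1 - p) * U) (by positivity)
  -- The linear terms of the two exponents cancel, leaving the squared deviation.
  have hexp : ((r : ℝ) - r ^ 2 / (p * U)) + (s - s ^ 2 / ((1 - p) * U)) =
      -((r - p * U) ^ 2 / U / (p * (1 - p))) := by
    have hs : (s : ℝ) = U - r := by linarith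
    rw [hs]
    field_simp
    ring
  have hsq : ((r : ℝ) - p * U) ^ 2 / U ≤ C ^ 2 := by
    rw [div_le_iff₀ hU0]
    calc ((r : ℝ) - p * U) ^ 2 = |(r : ℝ) - p * U| ^ 2 := (sq_abs _).symm
      _ ≤ (C * √U) ^ 2 := by gcongr
      _ = C ^ 2 * U := by rw [mul_pow, Real.sq_sqrt hU0.le]
  have hE : Real.exp (-(C ^ 2 / (p * (1 - p)))) ≤
      Real.exp (r - r ^ 2 / (p * U)) * Real.exp (s - s ^ 2 / ((1 - p) * U)) := by
    rw [← Real.exp_add, hexp]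
    gcongr
  have hroot : √((r : ℝ) + 1) * √((s : ℝ) + 1) ≤ 2 * U := by
    have hr0 : (0 : ℝ) ≤ r := by positivity
    have hs0 : (0 : ℝ) ≤ s := by positivity
    rw [← Real.sqrt_mul (by positivity)]
    apply Real.sqrt_le_iff.mpr ⟨by positivity, ?_⟩
    calc ((r : ℝ) + 1) * (s + 1) ≤ (2 * U) * (2 * U) := by gcongr <;> linarith
      _ = _ := by ring
  set K := Real.exp (-(C ^ 2 / (p * (1 - p)))) with hK
  set F : ℝ := (r.factorial : ℝ) * s.factorial with hF
  have hF0 : 0 < F := by positivity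
  have hmain : F * K ≤ Real.exp 1 ^ 2 * (2 * U) * ((U / Real.exp 1) ^ (r + s) *
      (p ^ r * (1 - p) ^ s)) := by
    calc F * K ≤ F * (Real.exp (r - r ^ 2 / (p * U)) *
          Real.exp (s - s ^ 2 / ((1 - p) * U))) := by gcongr
      _ = (r.factorial * Real.exp (r - r ^ 2 / (p * U))) *
          (s.factorial * Real.exp (s - s ^ 2 / ((1 - p) * U))) := by rw [hF]; ring
      _ ≤ _ := mul_le_mul hA hB (by positivity) (by positivity)
      _ = Real.exp 1 ^ 2 * (√((r : ℝ) + 1) * √((s : ℝ) + 1)) *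
          ((U / Real.exp 1) ^ (r + s) * (p ^ r * (1 - p) ^ s)) := by
        rw [mul_div_assoc, mul_div_assoc, mul_pow, mul_pow, pow_add]; ring
      _ ≤ _ := by gcongr
  have hsU : 0 < √U := Real.sqrt_pos.mpr hU0
  have hfin : F * (K * √U) ≤ F * (Real.exp 1 ^ 2 * (2 * U) *
      ((Nat.choose (r + s) r : ℝ) * p ^ r * (1 - p) ^ s)) := by
    calc F * (K * √U) = F * K * √U := by ring
      _ ≤ Real.exp 1 ^ 2 * (2 * U) * ((U / Real.exp 1) ^ (r + s) *
          (p ^ r * (1 - p) ^ s)) * √U := by gcongr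
      _ = Real.exp 1 ^ 2 * (2 * U) * (p ^ r * (1 - p) ^ s) *
          (√U * (U / Real.exp 1) ^ (r + s)) := by ring
      _ ≤ Real.exp 1 ^ 2 * (2 * U) * (p ^ r * (1 - p) ^ s) * (r + s).factorial := by gcongr
      _ = _ := by rw [← hchoose]; ring
  have hfin' := le_of_mul_le_mul_left hfin hF0
  have hrew : K / (2 * Real.exp 1 ^ 2) / √U = K * √U / (Real.exp 1 ^ 2 * (2 * U)) := by
    have := Real.sq_sqrt hU0.le
    rw [div_div, div_eq_div_iff (by positivity) (by positivity)]
    linear_combination (-2 * K * Real.exp 1 ^ 2) * this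
  rw [hrew, div_le_iff₀ (by positivity)]
  linarith
end
end

section
/- Let n ≥ 1, k ≥ 1, let y ∈ ℤ^k, and let g = gcd(y_1, y_2, …, y_k, n). If l_1,…,l_k are independent random elements, each uniformly distributed on ZMod n, then the random element f_l(y) = Σ_{i=1}^k y_i · l_i of ZMod n is uniformly distributed on the subgroup {x ∈ ZMod n : x is an integer multiple of g}: each of the n/g elements of this subgroup is attained with probability g/n, and all other elements with probability 0. -/
/-!
The map `l ↦ ∑ i, y i * l i` is a homomorphism `(ZMod n)^k → ZMod n`, so its nonempty fibres are
cosets of the kernel and it pushes the uniform distribution to the uniform one on its image.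
By Bézout (`range_evalHom`) the image is generated by `g = gcd(y₁, …, y_k, n)`, and it has `n / g`
elements because `g ∣ n` (`card_range_mul_genGcd`).
-/

open scoped BigOperators

noncomputable section

attribute [local instance 10] Classical.propDecidable

/-- The homomorphism `l ↦ ∑ i, y i * l i`, i.e. `f_l(y)` as a function of `l`. -/
def evalHom (n k : ℕ) (y : Fin k → ℤ) : (Fin k → ZMod n) →+ ZMod n where
  toFun l := ∑ i, (y i : ZMod n) * l i
  map_zero' := by simp
  map_add' a b := by simp [mul_add, Finset.sum_add_distrib]

/-- The generator `gcd(y₁, …, y_k, n)` of the image. -/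
abbrev genGcd (n k : ℕ) (y : Fin k → ℤ) : ℕ :=
  Nat.gcd n (Finset.univ.gcd fun i => (y i).natAbs)

/-- Bézout: the preimage of the image in `ℤ` is generated by some `d`, which divides `n` and
every `y i`, hence divides their gcd. -/
lemma genGcd_mem_range (n k : ℕ) (y : Fin k → ℤ) :
    ((genGcd n k y : ℕ) : ZMod n) ∈ (evalHom n k y).range := by
  obtain ⟨d, hd⟩ := Int.subgroup_cyclic
    ((evalHom n k y).range.comap (Int.castAddHom (ZMod n)))
  have key : ∀ x : ℤ, (x : ZMod n) ∈ (evalHom n k y).range ↔ d ∣ x := by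
    intro x
    rw [← Int.mem_zmultiples_iff, AddSubgroup.zmultiples_eq_closure, ← hd]
    rfl
  have h1 : d ∣ (n : ℤ) := by
    rw [← key]
    simp [zero_mem]
  have h2 : ∀ i, d ∣ y i := by
    intro i
    rw [← key]
    exact ⟨Pi.single i 1, by simp [evalHom, Pi.single_apply]⟩
  have h3 : d ∣ ((genGcd n k y : ℕ) : ℤ) := by
    rw [← Int.natAbs_dvd, Int.natCast_dvd_natCast]
    refine Nat.dvd_gcd ?_ (Finset.dvd_gcd fun i _ => Int.natAbs_dvd_natAbs.mpr (h2 i))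
    rwa [← Int.natCast_dvd_natCast, Int.natAbs_dvd]
  simpa using (key _).mpr h3

lemma range_evalHom (n k : ℕ) (y : Fin k → ℤ) :
    (evalHom n k y).range = AddSubgroup.zmultiples ((genGcd n k y : ℕ) : ZMod n) := by
  apply le_antisymm
  · rintro _ ⟨l, rfl⟩
    change ∑ i, (y i : ZMod n) * l i ∈ _
    refine sum_mem fun i _ => ?_
    have h : ((genGcd n k y : ℕ) : ℤ) ∣ y i :=
      Int.natCast_dvd.mpr ((Nat.gcd_dvd_right _ _).trans (Finset.gcd_dvd (Finset.mem_univ i)))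
    obtain ⟨c, hc⟩ := h
    obtain ⟨m, hm⟩ := ZMod.intCast_surjective (l i)
    refine AddSubgroup.mem_zmultiples_iff.mpr ⟨c * m, ?_⟩
    rw [hc, ← hm, zsmul_eq_mul]
    push_cast
    ring
  · rw [AddSubgroup.zmultiples_le]
    exact genGcd_mem_range n k y

lemma card_range_mul_genGcd (n : ℕ) [NeZero n] (k : ℕ) (y : Fin k → ℤ) :
    Nat.card (evalHom n k y).range * genGcd n k y = n := by
  rw [range_evalHom, Nat.card_zmultiples, ZMod.addOrderOf_coe _ (NeZero.ne n),
    Nat.gcd_eq_right (Nat.gcd_dvd_left _ _)]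
  exact Nat.div_mul_cancel (Nat.gcd_dvd_left _ _)

/-- A fibre over a point of the image is a translate of the kernel. -/
lemma card_fiber (n : ℕ) [NeZero n] (k : ℕ) (y : Fin k → ℤ) (z : ZMod n)
    (hz : z ∈ (evalHom n k y).range) :
    (Finset.univ.filter (fun l : Fin k → ZMod n => ∑ i, (y i : ZMod n) * l i = z)).card
      = Nat.card (evalHom n k y).ker := by
  have h := AddMonoidHom.card_fiber_eq_of_mem_range (evalHom n k y) hz
    (zero_mem (evalHom n k y).range)
  change (Finset.univ.filter (fun l => evalHom n k y l = z)).card = _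
  rw [Nat.card_eq_fintype_card, Fintype.card_subtype]
  convert h using 2
  ext l
  simp [AddMonoidHom.mem_ker]

/-- for general `n ≥ 1` and `y ∈ ℤ^k`, with `g = gcd(y₁,…,y_k,n)`,
if `l₁,…,l_k` are independent uniform elements of `ZMod n` (modelled as a uniform element
of the product space), then `f_l(y) = Σ y_i l_i` is uniform on the subgroup of integer
multiples of `g`: each such element has probability `g/n`, all others probability `0`. -/
theorem fl_uniform_on_subgroup (n : ℕ) [NeZero n] (hn : 1 ≤ n) (k : ℕ) (hk : 1 ≤ k)
    (y : Fin k → ℤ) :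
    ∀ z : ZMod n,
      ((Finset.univ.filter (fun l : Fin k → ZMod n =>
          ∑ i, (y i : ZMod n) * l i = z)).card : ℝ) /
        (Fintype.card (Fin k → ZMod n) : ℝ) =
      if ∃ x : ℤ,
          z = (x : ZMod n) * ((Nat.gcd n (Finset.univ.gcd fun i => (y i).natAbs) : ℕ) : ZMod n)
      then ((Nat.gcd n (Finset.univ.gcd fun i => (y i).natAbs) : ℝ)) / (n : ℝ)
      else 0 := by
  intro z
  have hex : (∃ x : ℤ, z = (x : ZMod n) * ((genGcd n k y : ℕ) : ZMod n)) ↔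
      z ∈ (evalHom n k y).range := by
    rw [range_evalHom, AddSubgroup.mem_zmultiples_iff]
    simp only [zsmul_eq_mul, eq_comm]
  by_cases hz : z ∈ (evalHom n k y).range
  · rw [if_pos (hex.mpr hz), card_fiber n k y z hz]
    have h1 := card_range_mul_genGcd n k y
    have h2 := AddSubgroup.card_mul_index (evalHom n k y).ker
    rw [AddSubgroup.index_ker, Nat.card_eq_fintype_card (α := Fin k → ZMod n)] at h2
    have hN : (Fintype.card (Fin k → ZMod n) : ℝ) ≠ 0 :=
      Nat.cast_ne_zero.mpr Fintype.card_ne_zero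
    have hn0 : (n : ℝ) ≠ 0 := Nat.cast_ne_zero.mpr (NeZero.ne n)
    -- Both cross products equal `|ker| * |range| * g`.
    rw [div_eq_div_iff hN hn0, ← h2]
    norm_cast
    change Nat.card (evalHom n k y).ker * n = genGcd n k y * _
    calc Nat.card (evalHom n k y).ker * n
        = Nat.card (evalHom n k y).ker * (Nat.card (evalHom n k y).range * genGcd n k y) :=
          congrArg _ h1.symm
      _ = _ := by ring
  · rw [if_neg (fun h => hz (hex.mp h))]
    have : Finset.univ.filter (fun l : Fin k → ZMod n =>
        ∑ i, (y i : ZMod n) * l i = z) = ∅ :=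
      Finset.filter_eq_empty_iff.mpr fun l _ h => hz ⟨l, h⟩
    rw [this]
    simp
end
end
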